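/- arXiv:2108.05416 — 6 statements merged into one kernel-verified Lean document; each statement's English description precedes it below -/
import Mathlib

section
/- Let n ≥ 1 and s ∈ (0,1). Let Ω ⊂ ℝⁿ be a nonempty open bounded convex set, let u ∈ L¹(ℝⁿ) satisfy u ≥ 0 almost everywhere, u = 0 almost everywhere outside Ω, and u not almost everywhere equal to 0. Let x₀ ∈ ∂Ω and let ν be a unit vector with ⟨ξ - x₀, ν⟩ ≤ 0 for every ξ ∈ Ω. Then for every y > 0 the map x ↦ w_u(x,y) is differentiable at x₀, its directional derivative in the direction ν equals (n+2s) ∫_{ℝⁿ} y^{2s} ⟨ξ - x₀, ν⟩ u(ξ) (|x₀-ξ|² + y²)^{-(n+2s+2)/2} dξ, and in particular this directional derivative is strictly negative. -/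
open MeasureTheory Real Filter
open scoped RealInnerProductSpace ENNReal

lemma continuous_norm_sub_sq_add_sq_rpow {E : Type*} [NormedAddCommGroup E] (p : ℝ) {y : ℝ}
    (hy : 0 < y) (x : E) :
    Continuous fun ξ : E => (‖x - ξ‖ ^ 2 + y ^ 2) ^ p :=
  Continuous.rpow_const (by fun_prop) fun ξ => Or.inl (by positivity)

section PoissonKernel

variable {E : Type*} [NormedAddCommGroup E] [InnerProductSpace ℝ E]

/-- The gradient, as a continuous linear form, of `x ↦ (‖x - ξ‖ ^ 2 + y ^ 2) ^ (-p / 2)`. -/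
lemma hasFDerivAt_norm_sub_sq_add_sq_rpow (p : ℝ) {y : ℝ} (hy : 0 < y) (ξ x : E) :
    HasFDerivAt (fun x : E => (‖x - ξ‖ ^ 2 + y ^ 2) ^ (-p / 2))
      ((-p * (‖x - ξ‖ ^ 2 + y ^ 2) ^ (-(p + 2) / 2)) • innerSL ℝ (x - ξ)) x := by
  have hQ : ‖x - ξ‖ ^ 2 + y ^ 2 ≠ 0 := by positivity
  have h := (((hasFDerivAt_id x).sub_const ξ).norm_sq.add_const (y ^ 2)).rpow_const
    (p := -p / 2) (Or.inl hQ)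
  refine h.congr_fderiv ?_
  ext v
  have he : -p / 2 - 1 = -(p + 2) / 2 := by ring
  simp [he]
  ring

lemma norm_gradient_norm_sub_sq_add_sq_rpow_le {p : ℝ} (hp : 0 ≤ p) {y : ℝ} (hy : 0 < y)
    (ξ x : E) :
    ‖(-p * (‖x - ξ‖ ^ 2 + y ^ 2) ^ (-(p + 2) / 2)) • innerSL ℝ (x - ξ)‖ ≤
      p * ((y ^ 2) ^ (-p / 2) / (2 * y)) := by
  have hQ : 0 < ‖x - ξ‖ ^ 2 + y ^ 2 := by positivity
  have he : -(p + 2) / 2 = -p / 2 - 1 := by ring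
  have hmono : (‖x - ξ‖ ^ 2 + y ^ 2) ^ (-p / 2) ≤ (y ^ 2) ^ (-p / 2) :=
    rpow_le_rpow_of_nonpos (by positivity) (by nlinarith [sq_nonneg ‖x - ξ‖]) (by linarith)
  have hr : ‖x - ξ‖ / (‖x - ξ‖ ^ 2 + y ^ 2) ≤ 1 / (2 * y) := by
    rw [div_le_div_iff₀ hQ (by positivity)]
    nlinarith [sq_nonneg (‖x - ξ‖ - y)]
  rw [norm_smul, innerSL_apply_norm, norm_mul, norm_neg, Real.norm_of_nonneg hp,
    Real.norm_of_nonneg (rpow_nonneg hQ.le _), he, rpow_sub_one hQ.ne', mul_assoc]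
  gcongr
  calc _ = (‖x - ξ‖ ^ 2 + y ^ 2) ^ (-p / 2) * (‖x - ξ‖ / (‖x - ξ‖ ^ 2 + y ^ 2)) := by ring
    _ ≤ (y ^ 2) ^ (-p / 2) * (1 / (2 * y)) := by gcongr
    _ = _ := by ring

variable [FiniteDimensional ℝ E] [MeasurableSpace E] [BorelSpace E] {μ : Measure E}

/-- The gradient of the kernel, weighted by an integrable function, is integrable. -/
lemma integrable_smul_gradient_norm_sub_sq_add_sq_rpow {p : ℝ} (hp : 0 ≤ p) {y : ℝ}
    (hy : 0 < y) {u : E → ℝ} (hu : Integrable u μ) (x : E) :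
    Integrable (fun ξ => u ξ •
      ((-p * (‖x - ξ‖ ^ 2 + y ^ 2) ^ (-(p + 2) / 2)) • innerSL ℝ (x - ξ))) μ := by
  have hc : Continuous fun ξ : E =>
      (-p * (‖x - ξ‖ ^ 2 + y ^ 2) ^ (-(p + 2) / 2)) • innerSL ℝ (x - ξ) :=
    (continuous_const.mul (continuous_norm_sub_sq_add_sq_rpow _ hy x)).smul
      ((innerSL ℝ).continuous.comp (by fun_prop))
  exact hu.smul_bdd _ hc.aestronglyMeasurable
    (ae_of_all _ fun ξ => norm_gradient_norm_sub_sq_add_sq_rpow_le hp hy ξ x)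

/-- Differentiation under the integral sign for convolution with the kernel
`(‖x‖ ^ 2 + y ^ 2) ^ (-p / 2)`. -/
lemma hasFDerivAt_integral_mul_norm_sub_sq_add_sq_rpow {p : ℝ} (hp : 0 ≤ p) {y : ℝ}
    (hy : 0 < y) {u : E → ℝ} (hu : Integrable u μ) (x₀ : E) :
    HasFDerivAt (fun x => ∫ ξ, u ξ * (‖x - ξ‖ ^ 2 + y ^ 2) ^ (-p / 2) ∂μ)
      (∫ ξ, u ξ • ((-p * (‖x₀ - ξ‖ ^ 2 + y ^ 2) ^ (-(p + 2) / 2)) • innerSL ℝ (x₀ - ξ)) ∂μ)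
      x₀ := by
  have hK (x : E) := (continuous_norm_sub_sq_add_sq_rpow (-p / 2) hy x).aestronglyMeasurable
    (μ := μ)
  refine hasFDerivAt_integral_of_dominated_of_fderiv_le (s := Set.univ)
    (bound := fun ξ => ‖u ξ‖ * (p * ((y ^ 2) ^ (-p / 2) / (2 * y))))
    (F' := fun x ξ => u ξ •
      ((-p * (‖x - ξ‖ ^ 2 + y ^ 2) ^ (-(p + 2) / 2)) • innerSL ℝ (x - ξ)))
    univ_mem (Eventually.of_forall fun x => hu.aestronglyMeasurable.mul (hK x)) ?_
    (integrable_smul_gradient_norm_sub_sq_add_sq_rpow hp hy hu x₀).aestronglyMeasurable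
    (ae_of_all _ fun ξ x _ => ?_) (hu.norm.mul_const _) (ae_of_all _ fun ξ x _ => ?_)
  · refine hu.mul_bdd (c := (y ^ 2) ^ (-p / 2)) (hK x₀) (ae_of_all _ fun ξ => ?_)
    rw [Real.norm_of_nonneg (by positivity)]
    exact rpow_le_rpow_of_nonpos (by positivity) (by nlinarith [sq_nonneg ‖x₀ - ξ‖])
      (by linarith)
  · rw [norm_smul]
    gcongr
    exact norm_gradient_norm_sub_sq_add_sq_rpow_le hp hy ξ x
  · exact (hasFDerivAt_norm_sub_sq_add_sq_rpow p hy ξ x).const_mul (u ξ)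

end PoissonKernel

/-- A supporting hyperplane of an open set does not meet it. -/
lemma IsOpen.inner_sub_neg_of_forall_nonpos {E : Type*} [NormedAddCommGroup E]
    [InnerProductSpace ℝ E] {Ω : Set E} (hΩ : IsOpen Ω) {x₀ ν : E} (hν : ν ≠ 0)
    (h : ∀ ξ ∈ Ω, ⟪ξ - x₀, ν⟫ ≤ 0) {ξ : E} (hξ : ξ ∈ Ω) : ⟪ξ - x₀, ν⟫ < 0 := by
  have hcont : Tendsto (fun t : ℝ => ξ + t • ν) (nhdsWithin 0 (Set.Ioi 0)) (nhds ξ) := by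
    have : Continuous fun t : ℝ => ξ + t • ν := by fun_prop
    simpa using (this.tendsto 0).mono_left nhdsWithin_le_nhds
  obtain ⟨t, htΩ, ht⟩ :=
    ((hcont.eventually (hΩ.mem_nhds hξ)).and self_mem_nhdsWithin).exists
  have h1 := h _ htΩ
  rw [add_sub_right_comm, inner_add_left, real_inner_smul_left] at h1
  have h2 : 0 < t * ⟪ν, ν⟫ := mul_pos ht (real_inner_self_pos.2 hν)
  linarith

/-- For a bounded open convex `Ω`, a nonnegative nontrivial `u ∈ L¹` vanishing a.e. outside
`Ω`, a boundary point `x₀ ∈ ∂Ω` and an outer unit normal `ν` of a supporting hyperplane of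
`Ω` at `x₀`, for every `y > 0` the map `x ↦ w_u(x,y)` is differentiable at `x₀`, its
directional derivative in direction `ν` equals
`(n+2s) ∫ y^{2s} ⟨ξ-x₀, ν⟩ u(ξ)(|x₀-ξ|²+y²)^{-(n+2s+2)/2} dξ`, and this derivative is
strictly negative. -/
theorem stmt5 {n : ℕ} (hn : 1 ≤ n) (s : ℝ) (hs : s ∈ Set.Ioo (0 : ℝ) 1)
    (Ω : Set (EuclideanSpace ℝ (Fin n))) (hΩopen : IsOpen Ω) (hΩne : Ω.Nonempty)
    (hΩbdd : Bornology.IsBounded Ω) (hΩconv : Convex ℝ Ω)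
    (u : EuclideanSpace ℝ (Fin n) → ℝ) (hu : Integrable u)
    (hpos : ∀ᵐ ξ, 0 ≤ u ξ) (hzero : ∀ᵐ ξ, ξ ∉ Ω → u ξ = 0)
    (hne : ¬ (u =ᵐ[volume] 0))
    (x₀ : EuclideanSpace ℝ (Fin n)) (hx₀ : x₀ ∈ frontier Ω)
    (ν : EuclideanSpace ℝ (Fin n)) (hν : ‖ν‖ = 1)
    (hsupp : ∀ ξ ∈ Ω, ⟪ξ - x₀, ν⟫ ≤ 0)
    (y : ℝ) (hy : 0 < y) :
    DifferentiableAt ℝ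
      (fun x : EuclideanSpace ℝ (Fin n) =>
        ∫ ξ : EuclideanSpace ℝ (Fin n),
          y ^ (2 * s) * u ξ * (‖x - ξ‖ ^ 2 + y ^ 2) ^ (-((n : ℝ) + 2 * s) / 2)) x₀ ∧
    fderiv ℝ
      (fun x : EuclideanSpace ℝ (Fin n) =>
        ∫ ξ : EuclideanSpace ℝ (Fin n),
          y ^ (2 * s) * u ξ * (‖x - ξ‖ ^ 2 + y ^ 2) ^ (-((n : ℝ) + 2 * s) / 2)) x₀ ν
      = ((n : ℝ) + 2 * s) *
        ∫ ξ : EuclideanSpace ℝ (Fin n),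
          y ^ (2 * s) * ⟪ξ - x₀, ν⟫ * u ξ *
            (‖x₀ - ξ‖ ^ 2 + y ^ 2) ^ (-((n : ℝ) + 2 * s + 2) / 2) ∧
    fderiv ℝ
      (fun x : EuclideanSpace ℝ (Fin n) =>
        ∫ ξ : EuclideanSpace ℝ (Fin n),
          y ^ (2 * s) * u ξ * (‖x - ξ‖ ^ 2 + y ^ 2) ^ (-((n : ℝ) + 2 * s) / 2)) x₀ ν < 0 := by
  have hp : 0 < (n : ℝ) + 2 * s := by have := hs.1; positivity
  have hν0 : ν ≠ 0 := norm_pos_iff.1 (hν ▸ one_pos)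
  have hv : Integrable fun ξ => y ^ (2 * s) * u ξ := hu.const_mul _
  have hderiv := hasFDerivAt_integral_mul_norm_sub_sq_add_sq_rpow hp.le hy hv x₀
  have hint := integrable_smul_gradient_norm_sub_sq_add_sq_rpow hp.le hy hv x₀
  have hpointwise (ξ : EuclideanSpace ℝ (Fin n)) :
      ((y ^ (2 * s) * u ξ) • ((-((n : ℝ) + 2 * s) * (‖x₀ - ξ‖ ^ 2 + y ^ 2) ^
        (-((n : ℝ) + 2 * s + 2) / 2)) • innerSL ℝ (x₀ - ξ))) ν =
      ((n : ℝ) + 2 * s) * (y ^ (2 * s) * ⟪ξ - x₀, ν⟫ * u ξ *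
        (‖x₀ - ξ‖ ^ 2 + y ^ 2) ^ (-((n : ℝ) + 2 * s + 2) / 2)) := by
    rw [smul_apply, smul_apply, innerSL_apply_apply,
      ← neg_sub ξ x₀, inner_neg_left, smul_eq_mul, smul_eq_mul]
    ring
  have hformula := ContinuousLinearMap.integral_apply hint ν
  have hintν := hint.apply_continuousLinearMap ν
  simp_rw [hpointwise] at hformula hintν
  rw [integral_const_mul] at hformula
  replace hintν := (integrable_const_mul_iff (isUnit_iff_ne_zero.2 hp.ne') _).1 hintν
  rw [hderiv.fderiv, hformula]
  refine ⟨hderiv.differentiableAt, rfl, mul_neg_of_pos_of_neg hp ?_⟩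
  have hle : (fun ξ => y ^ (2 * s) * ⟪ξ - x₀, ν⟫ * u ξ *
      (‖x₀ - ξ‖ ^ 2 + y ^ 2) ^ (-((n : ℝ) + 2 * s + 2) / 2)) ≤ᵐ[volume] 0 := by
    filter_upwards [hpos, hzero] with ξ h0 hout
    by_cases hξ : ξ ∈ Ω
    · exact mul_nonpos_of_nonpos_of_nonneg (mul_nonpos_of_nonpos_of_nonneg
        (mul_nonpos_of_nonneg_of_nonpos (by positivity) (hsupp ξ hξ)) h0) (by positivity)
    · simp [hout hξ]
  refine (integral_nonpos_of_ae hle).lt_of_ne fun h0 => hne ?_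
  rw [← neg_eq_zero, ← integral_neg, integral_eq_zero_iff_of_nonneg_ae
    (hle.mono fun ξ h => neg_nonneg.2 h) hintν.neg] at h0
  filter_upwards [h0, hzero] with ξ h hout
  by_cases hξ : ξ ∈ Ω
  · have hneg := hΩopen.inner_sub_neg_of_forall_nonpos hν0 hsupp hξ
    have hQ : 0 < (‖x₀ - ξ‖ ^ 2 + y ^ 2) ^ (-((n : ℝ) + 2 * s + 2) / 2) := by positivity
    have hy2 : 0 < y ^ (2 * s) := by positivity
    have h' := neg_eq_zero.1 h
    exact (mul_eq_zero.1 ((mul_eq_zero.1 h').resolve_right hQ.ne')).resolve_left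
      (mul_ne_zero hy2.ne' hneg.ne)
  · exact hout hξ
end

section
/- Let n ≥ 1 and s ∈ (0,1). For every Schwartz function u : ℝⁿ → ℂ, ∫_{ℝⁿ} |ξ|^{2s} |𝓕u(ξ)|² dξ = c_{n,s} ∬_{ℝⁿ×ℝⁿ} |u(x)-u(y)|² / |x-y|^{n+2s} dx dy, where c_{n,s} = 2^{2s-1} π^{-n/2} Γ((n+2s)/2) / |Γ(-s)|. -/
open MeasureTheory Real Filter
open scoped RealInnerProductSpace ENNReal

/-- The Fourier transform with the convention
`𝓕u(ξ) = (2π)^{-n/2} ∫ e^{-i⟨ξ,x⟩} u(x) dx`. -/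
noncomputable def FT {n : ℕ} (u : EuclideanSpace ℝ (Fin n) → ℂ)
    (ξ : EuclideanSpace ℝ (Fin n)) : ℂ :=
  (((2 * Real.pi) ^ (-(n : ℝ) / 2) : ℝ) : ℂ) *
    ∫ x : EuclideanSpace ℝ (Fin n),
      Complex.exp (-Complex.I * ((⟪ξ, x⟫ : ℝ) : ℂ)) * u x

/-- The constant `c_{n,s} = 2^{2s-1} π^{-n/2} Γ((n+2s)/2) / |Γ(-s)|`. -/
noncomputable def cns (n : ℕ) (s : ℝ) : ℝ :=
  2 ^ (2 * s - 1) * Real.pi ^ (-(n : ℝ) / 2) * Real.Gamma (((n : ℝ) + 2 * s) / 2) /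
    |Real.Gamma (-s)|

/-- The Gamma integral, as a Lebesgue integral of a nonnegative function. -/
lemma lintegral_rpow_mul_exp_neg_mul_Ioi {a r : ℝ} (ha : 0 < a) (hr : 0 < r) :
    ∫⁻ t in Set.Ioi (0 : ℝ), ENNReal.ofReal (t ^ (a - 1) * exp (-(r * t))) =
      ENNReal.ofReal ((1 / r) ^ a * Gamma a) := by
  have key := integral_rpow_mul_exp_neg_mul_Ioi ha hr
  have hpos : 0 < (1 / r) ^ a * Gamma a := mul_pos (by positivity) (Gamma_pos_of_pos ha)
  rw [← key, ofReal_integral_eq_lintegral_ofReal]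
  · exact .of_integral_ne_zero (by rw [key]; exact hpos.ne')
  · filter_upwards [ae_restrict_mem measurableSet_Ioi] with t ht
    have : (0 : ℝ) < t := ht
    simp only [Pi.zero_apply]
    positivity

/-- Change of variables `t ↦ t⁻¹` on the positive half-line. -/
lemma lintegral_Ioi_eq_lintegral_comp_inv (g : ℝ → ℝ≥0∞) :
    ∫⁻ t in Set.Ioi (0 : ℝ), g t =
      ∫⁻ r in Set.Ioi (0 : ℝ), ENNReal.ofReal ((r ^ 2)⁻¹) * g r⁻¹ := by
  have himg : (fun r : ℝ => r⁻¹) '' Set.Ioi 0 = Set.Ioi 0 := by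
    ext r
    simp
  conv_lhs => rw [← himg]
  rw [lintegral_image_eq_lintegral_abs_deriv_mul measurableSet_Ioi
    (fun x hx => (hasDerivAt_inv (ne_of_gt hx)).hasDerivWithinAt) inv_injective.injOn]
  refine setLIntegral_congr_fun measurableSet_Ioi fun r _ => ?_
  simp only [abs_neg]
  rw [abs_of_nonneg (by positivity)]

lemma lintegral_Ioc_exp_neg_mul {b r : ℝ} (hb : 0 ≤ b) (hr : 0 < r) :
    ∫⁻ v in Set.Ioc 0 b, ENNReal.ofReal (r * exp (-(v * r))) =
      ENNReal.ofReal (1 - exp (-(b * r))) := by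
  have hderiv : ∀ v ∈ Set.uIcc 0 b,
      HasDerivAt (fun v : ℝ => -exp (-(v * r))) (r * exp (-(v * r))) v := fun v _ => by
    have h := (((hasDerivAt_id v).mul_const r).neg.exp).neg
    convert! h using 1
    simp; ring
  have hcont : Continuous fun v : ℝ => r * exp (-(v * r)) := by fun_prop
  have hint := intervalIntegral.integral_eq_sub_of_hasDerivAt hderiv
    (hcont.intervalIntegrable _ _)
  rw [← ofReal_integral_eq_lintegral_ofReal
    ((hcont.integrableOn_Icc).mono_set Set.Ioc_subset_Icc_self)
    (ae_of_all _ fun v => by simp only [Pi.zero_apply]; positivity),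
    ← intervalIntegral.integral_of_le hb, hint]
  congr 1
  simp; ring

lemma lintegral_Ioc_rpow {b s : ℝ} (hb : 0 ≤ b) (hs : 0 < s) :
    ∫⁻ v in Set.Ioc 0 b, ENNReal.ofReal (v ^ (s - 1)) = ENNReal.ofReal (b ^ s / s) := by
  have hint := integral_rpow (a := 0) (b := b) (r := s - 1) (Or.inl (by linarith))
  have hii : IntervalIntegrable (fun v : ℝ => v ^ (s - 1)) volume 0 b :=
    intervalIntegral.intervalIntegrable_rpow' (by linarith)
  rw [← ofReal_integral_eq_lintegral_ofReal
    ((intervalIntegrable_iff_integrableOn_Ioc_of_le hb).mp hii),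
    ← intervalIntegral.integral_of_le hb, hint]
  · simp [hs.ne']
  · filter_upwards [ae_restrict_mem measurableSet_Ioc] with v hv
    exact rpow_nonneg hv.1.le _

lemma lintegral_Ioi_rpow_mul_one_sub_exp {b s : ℝ} (hb : 0 ≤ b) (hs : s ∈ Set.Ioo (0 : ℝ) 1) :
    ∫⁻ t in Set.Ioi (0 : ℝ), ENNReal.ofReal (t ^ (s - 1) * (1 - exp (-(b / t)))) =
      ENNReal.ofReal (Gamma (1 - s) * (b ^ s / s)) := by
  have hΓ : 0 < Gamma (1 - s) := Gamma_pos_of_pos (by linarith [hs.2])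
  calc
    _ = ∫⁻ r in Set.Ioi (0 : ℝ), ∫⁻ v in Set.Ioc 0 b,
          ENNReal.ofReal (r ^ (1 - s - 1) * exp (-(v * r))) := by
      rw [lintegral_Ioi_eq_lintegral_comp_inv]
      refine setLIntegral_congr_fun measurableSet_Ioi fun r (hr : 0 < r) => ?_
      have hpow : r ^ (1 - s - 1) = (r ^ 2)⁻¹ * r⁻¹ ^ (s - 1) * r := by
        rw [inv_rpow hr.le, ← rpow_neg hr.le, ← rpow_natCast, ← rpow_neg hr.le,
          ← rpow_add hr]
        nth_rw 3 [← rpow_one r]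
        rw [← rpow_add hr]
        congr 1; push_cast; ring
      simp only [hpow, mul_assoc]
      rw [← ENNReal.ofReal_mul (by positivity), ← mul_assoc,
        ENNReal.ofReal_mul (by positivity), div_inv_eq_mul, ← lintegral_Ioc_exp_neg_mul hb hr,
        ← lintegral_const_mul _ (by fun_prop)]
      refine lintegral_congr fun v => ?_
      rw [← ENNReal.ofReal_mul (by positivity)]
      ring_nf
    _ = ∫⁻ v in Set.Ioc 0 b, ∫⁻ r in Set.Ioi (0 : ℝ),
          ENNReal.ofReal (r ^ (1 - s - 1) * exp (-(v * r))) :=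
      lintegral_lintegral_swap (by fun_prop)
    _ = ∫⁻ v in Set.Ioc 0 b, ENNReal.ofReal (Gamma (1 - s)) * ENNReal.ofReal (v ^ (s - 1)) := by
      refine setLIntegral_congr_fun measurableSet_Ioc fun v hv => ?_
      rw [lintegral_rpow_mul_exp_neg_mul_Ioi (by linarith [hs.2]) hv.1,
        ← ENNReal.ofReal_mul hΓ.le, one_div, inv_rpow hv.1.le, ← rpow_neg hv.1.le, mul_comm,
        neg_sub]
    _ = _ := by
      rw [lintegral_const_mul _ (by fun_prop), lintegral_Ioc_rpow hb hs.1,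
        ENNReal.ofReal_mul hΓ.le]

section InnerProductSpace

variable {V : Type*} [NormedAddCommGroup V] [InnerProductSpace ℝ V] [FiniteDimensional ℝ V]
  [MeasurableSpace V] [BorelSpace V]

lemma integral_exp_neg_mul_sq_norm_mul_cos {t : ℝ} (ht : 0 < t) (w : V) :
    ∫ h : V, exp (-t * ‖h‖ ^ 2) * cos ⟪w, h⟫ =
      (π / t) ^ (Module.finrank ℝ V / 2 : ℝ) * exp (-(‖w‖ ^ 2 / 4 / t)) := by
  have key := GaussianFourier.integral_cexp_neg_mul_sq_norm_add (V := V) (b := t)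
    (by simpa using ht) Complex.I w
  have hint := GaussianFourier.integrable_cexp_neg_mul_sq_norm_add (V := V) (b := t)
    (by simpa using ht) Complex.I w
  have hre := congrArg Complex.re key
  rw [← Complex.reCLM_apply, ← ContinuousLinearMap.integral_comp_comm _ hint] at hre
  convert hre using 1
  · refine integral_congr_ae (ae_of_all _ fun h => ?_)
    simp only [Complex.reCLM_apply]
    rw [Complex.exp_re]
    simp [← Complex.ofReal_pow]
  · have : ((π : ℂ) / t) ^ (Module.finrank ℝ V / 2 : ℂ) *
        Complex.exp (Complex.I ^ 2 * ‖w‖ ^ 2 / (4 * t)) =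
        (((π / t) ^ (Module.finrank ℝ V / 2 : ℝ) * exp (-(‖w‖ ^ 2 / 4 / t)) : ℝ) : ℂ) := by
      push_cast
      rw [Complex.ofReal_cpow (by positivity)]
      push_cast
      congr 2
      rw [Complex.I_sq]
      field_simp
    rw [this, Complex.ofReal_re]

lemma lintegral_exp_neg_mul_sq_norm_mul_one_sub_cos {t : ℝ} (ht : 0 < t) (w : V) :
    ∫⁻ h : V, ENNReal.ofReal (exp (-t * ‖h‖ ^ 2) * (1 - cos ⟪w, h⟫)) =
      ENNReal.ofReal ((π / t) ^ (Module.finrank ℝ V / 2 : ℝ) *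
        (1 - exp (-(‖w‖ ^ 2 / 4 / t)))) := by
  have hgauss := GaussianFourier.integral_rexp_neg_mul_sq_norm (V := V) ht
  have hi : Integrable fun h : V => exp (-t * ‖h‖ ^ 2) :=
    .of_integral_ne_zero (by rw [hgauss]; positivity)
  have hicos : Integrable fun h : V => exp (-t * ‖h‖ ^ 2) * cos ⟪w, h⟫ :=
    hi.mul_bdd (c := 1) (by fun_prop) (ae_of_all _ fun h => abs_cos_le_one _)
  rw [← ofReal_integral_eq_lintegral_ofReal]
  · simp only [mul_sub, mul_one]
    rw [integral_sub hi hicos, hgauss, integral_exp_neg_mul_sq_norm_mul_cos ht]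
  · exact (hi.sub hicos).congr (ae_of_all _ fun h => by simp [mul_sub])
  · exact ae_of_all _ fun h => mul_nonneg (exp_pos _).le (sub_nonneg.2 (cos_le_one _))

lemma abs_Gamma_neg {s : ℝ} (hs : s ∈ Set.Ioo (0 : ℝ) 1) : |Gamma (-s)| = Gamma (1 - s) / s := by
  have hΓ : 0 < Gamma (1 - s) := Gamma_pos_of_pos (by linarith [hs.2])
  have h := Gamma_add_one (s := -s) (by linarith [hs.1])
  have hs0 := hs.1
  rw [neg_add_eq_sub] at h
  have h' : Gamma (-s) = -(Gamma (1 - s) / s) := by rw [h]; field_simp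
  rw [h', abs_neg, abs_of_pos (by positivity)]

lemma cns_pos (n : ℕ) {s : ℝ} (hs : s ∈ Set.Ioo (0 : ℝ) 1) : 0 < cns n s := by
  have hs0 := hs.1
  have hΓ : 0 < Gamma (1 - s) := Gamma_pos_of_pos (by linarith [hs.2])
  have hΓ' : 0 < Gamma (((n : ℝ) + 2 * s) / 2) := Gamma_pos_of_pos (by positivity)
  rw [cns, abs_Gamma_neg hs]
  positivity

lemma ofReal_one_sub_cos_div_rpow_norm_eq_lintegral {E : Type*} [NormedAddCommGroup E]
    [InnerProductSpace ℝ E] {a : ℝ} (ha : 0 < a) (w h : E) :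
    ENNReal.ofReal (2 * (1 - cos ⟪w, h⟫) / ‖h‖ ^ (2 * a)) =
      ∫⁻ t in Set.Ioi (0 : ℝ), ENNReal.ofReal (2 / Gamma a * t ^ (a - 1)) *
        ENNReal.ofReal (exp (-t * ‖h‖ ^ 2) * (1 - cos ⟪w, h⟫)) := by
  rcases eq_or_ne h 0 with rfl | hh
  · simp
  have hΓ : 0 < Gamma a := Gamma_pos_of_pos ha
  have hcos : 0 ≤ 1 - cos ⟪w, h⟫ := sub_nonneg.2 (cos_le_one _)
  have hh0 : 0 < ‖h‖ := norm_pos_iff.2 hh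
  have hpow : ‖h‖ ^ (2 * a) = (‖h‖ ^ 2) ^ a := by
    rw [rpow_mul hh0.le, rpow_two]
  calc
    _ = ENNReal.ofReal (2 / Gamma a * (1 - cos ⟪w, h⟫)) *
          ENNReal.ofReal ((1 / ‖h‖ ^ 2) ^ a * Gamma a) := by
      rw [← ENNReal.ofReal_mul (by positivity), hpow, one_div, inv_rpow (by positivity)]
      congr 1
      field_simp
    _ = _ := by
      rw [← lintegral_rpow_mul_exp_neg_mul_Ioi ha (by positivity),
        ← lintegral_const_mul _ (by fun_prop)]
      refine setLIntegral_congr_fun measurableSet_Ioi fun t (ht : 0 < t) => ?_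
      rw [← ENNReal.ofReal_mul (by positivity), ← ENNReal.ofReal_mul (by positivity)]
      ring_nf

/-- The symbol of the fractional Laplacian as a singular integral. -/
lemma lintegral_one_sub_cos_div_rpow_norm {s : ℝ} (hs : s ∈ Set.Ioo (0 : ℝ) 1) (w : V) :
    ∫⁻ h : V,
        ENNReal.ofReal (2 * (1 - cos ⟪w, h⟫) / ‖h‖ ^ ((Module.finrank ℝ V : ℝ) + 2 * s)) =
      ENNReal.ofReal (‖w‖ ^ (2 * s) / cns (Module.finrank ℝ V) s) := by
  set n := Module.finrank ℝ V with hn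
  set a : ℝ := ((n : ℝ) + 2 * s) / 2 with ha
  have hs0 := hs.1
  have ha0 : 0 < a := by positivity
  have hΓ : 0 < Gamma a := Gamma_pos_of_pos ha0
  have hΓ' : 0 < Gamma (1 - s) := Gamma_pos_of_pos (by linarith [hs.2])
  have had : (n : ℝ) + 2 * s = 2 * a := by rw [ha]; ring
  simp_rw [had, ofReal_one_sub_cos_div_rpow_norm_eq_lintegral ha0 w]
  rw [lintegral_lintegral_swap (by fun_prop)]
  calc
    _ = ∫⁻ t in Set.Ioi (0 : ℝ), ENNReal.ofReal (2 / Gamma a * π ^ ((n : ℝ) / 2)) *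
          ENNReal.ofReal (t ^ (s - 1) * (1 - exp (-(‖w‖ ^ 2 / 4 / t)))) := by
      refine setLIntegral_congr_fun measurableSet_Ioi fun t (ht : 0 < t) => ?_
      rw [lintegral_const_mul _ (by fun_prop), lintegral_exp_neg_mul_sq_norm_mul_one_sub_cos ht,
        ← hn, ← ENNReal.ofReal_mul (by positivity), ← ENNReal.ofReal_mul (by positivity)]
      have hpow : t ^ (a - 1) = t ^ ((n : ℝ) / 2) * t ^ (s - 1) := by
        rw [← rpow_add ht, ha]; congr 1; ring
      rw [hpow, div_rpow pi_pos.le ht.le]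
      congr 1
      have := rpow_pos_of_pos ht ((n : ℝ) / 2)
      field_simp
    _ = _ := by
      rw [lintegral_const_mul _ (by fun_prop),
        lintegral_Ioi_rpow_mul_one_sub_exp (by positivity) hs,
        ← ENNReal.ofReal_mul (by positivity), cns, abs_Gamma_neg hs, ← ha]
      congr 1
      have h1 : (‖w‖ ^ 2 / 4) ^ s = ‖w‖ ^ (2 * s) / 2 ^ (2 * s) := by
        rw [div_rpow (by positivity) (by positivity), rpow_mul (by positivity),
          rpow_mul (by positivity)]
        norm_num
      rw [h1, neg_div, rpow_neg pi_pos.le, rpow_sub_one (by norm_num)]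
      field_simp

lemma norm_fourier_sub_compSubConstCLM_sq (u : SchwartzMap V ℂ) (h η : V) :
    ‖FourierTransform.fourier (u - u.compSubConstCLM ℂ h) η‖ ^ 2 =
      2 * (1 - cos ⟪(2 * π) • η, h⟫) * ‖FourierTransform.fourier u η‖ ^ 2 := by
  have hshift : FourierTransform.fourier (u.compSubConstCLM ℂ h) η =
      Complex.exp (((-⟪(2 * π) • η, h⟫ : ℝ) : ℂ) * Complex.I) * FourierTransform.fourier u η := by
    have key := congrFun (VectorFourier.fourierIntegral_comp_add_right Real.fourierChar
      (volume : Measure V) (innerₗ V) u (-h)) η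
    rw [SchwartzMap.fourier_coe, SchwartzMap.fourier_coe]
    refine Eq.trans ?_ (key.trans ?_)
    · change VectorFourier.fourierIntegral Real.fourierChar volume (innerₗ V)
        (fun x => u (x - h)) η = _
      simp only [sub_eq_add_neg]
      rfl
    rw [Circle.smul_def, Real.fourierChar_apply]
    simp only [innerₗ_apply_apply, inner_neg_left, inner_smul_left, smul_eq_mul]
    congr 2
    rw [real_inner_comm]
    simp
  have hsub : FourierTransform.fourier (u - u.compSubConstCLM ℂ h) η =
      FourierTransform.fourier u η - FourierTransform.fourier (u.compSubConstCLM ℂ h) η := by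
    rw [sub_eq_add_neg, FourierTransform.fourier_add, FourierTransform.fourier_neg,
      ← sub_eq_add_neg]
    rfl
  rw [hsub, hshift, ← one_sub_mul, norm_mul, mul_pow]
  congr 1
  rw [← Complex.normSq_eq_norm_sq, Complex.normSq_apply]
  simp only [Complex.sub_re, Complex.sub_im, Complex.one_re, Complex.one_im,
    Complex.exp_ofReal_mul_I_re, Complex.exp_ofReal_mul_I_im, cos_neg, sin_neg]
  nlinarith [sin_sq_add_cos_sq ⟪(2 * π) • η, h⟫]

lemma SchwartzMap.integrable_norm_sq (f : SchwartzMap V ℂ) :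
    Integrable fun x => ‖f x‖ ^ 2 :=
  (memLp_two_iff_integrable_sq_norm f.continuous.aestronglyMeasurable).1 (f.memLp 2)

lemma SchwartzMap.lintegral_norm_sq_fourier (f : SchwartzMap V ℂ) :
    ∫⁻ η, ENNReal.ofReal (‖FourierTransform.fourier f η‖ ^ 2) =
      ∫⁻ x, ENNReal.ofReal (‖f x‖ ^ 2) := by
  rw [← ofReal_integral_eq_lintegral_ofReal (integrable_norm_sq _)
    (ae_of_all _ fun x => sq_nonneg _), ← ofReal_integral_eq_lintegral_ofReal
    (integrable_norm_sq _) (ae_of_all _ fun x => sq_nonneg _), integral_norm_sq_fourier]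

lemma lintegral_norm_sub_sq (u : SchwartzMap V ℂ) (h : V) :
    ∫⁻ x, ENNReal.ofReal (‖u x - u (x - h)‖ ^ 2) =
      ∫⁻ η, ENNReal.ofReal (2 * (1 - cos ⟪(2 * π) • η, h⟫) *
        ‖FourierTransform.fourier u η‖ ^ 2) := by
  simp_rw [← norm_fourier_sub_compSubConstCLM_sq]
  rw [SchwartzMap.lintegral_norm_sq_fourier]
  rfl

/-- The Gagliardo seminorm on the Fourier side. -/
lemma lintegral_gagliardo_eq_lintegral_fourier {s : ℝ} (hs : s ∈ Set.Ioo (0 : ℝ) 1)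
    (u : SchwartzMap V ℂ) :
    ∫⁻ p : V × V, ENNReal.ofReal
        (‖u p.1 - u p.2‖ ^ 2 / ‖p.1 - p.2‖ ^ ((Module.finrank ℝ V : ℝ) + 2 * s)) =
      ∫⁻ η : V, ENNReal.ofReal (‖(2 * π) • η‖ ^ (2 * s) / cns (Module.finrank ℝ V) s *
        ‖FourierTransform.fourier u η‖ ^ 2) := by
  set d : ℝ := (Module.finrank ℝ V : ℝ) + 2 * s with hd
  have hu : Measurable u := u.continuous.measurable
  have hû : Measurable (FourierTransform.fourier u) :=
    (FourierTransform.fourier u).continuous.measurable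
  have hc := cns_pos (Module.finrank ℝ V) hs
  calc
    _ = ∫⁻ x : V, ∫⁻ h : V, ENNReal.ofReal (‖u x - u (x - h)‖ ^ 2 / ‖h‖ ^ d) := by
      rw [Measure.volume_eq_prod, lintegral_prod _ (by fun_prop)]
      refine lintegral_congr fun x => ?_
      rw [← lintegral_sub_left_eq_self _ x]
      simp
    _ = ∫⁻ h : V, ∫⁻ x : V, ENNReal.ofReal (‖u x - u (x - h)‖ ^ 2 / ‖h‖ ^ d) :=
      lintegral_lintegral_swap (by fun_prop)
    _ = ∫⁻ h : V, ∫⁻ η : V, ENNReal.ofReal (2 * (1 - cos ⟪(2 * π) • η, h⟫) / ‖h‖ ^ d) *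
          ENNReal.ofReal (‖FourierTransform.fourier u η‖ ^ 2) := by
      refine lintegral_congr fun h => ?_
      have hnn : 0 ≤ (‖h‖ ^ d)⁻¹ := by positivity
      simp only [div_eq_mul_inv, ENNReal.ofReal_mul' hnn]
      rw [lintegral_mul_const _ (by fun_prop), lintegral_norm_sub_sq,
        ← lintegral_mul_const _ (by fun_prop)]
      refine lintegral_congr fun η => ?_
      rw [ENNReal.ofReal_mul' (by positivity), mul_right_comm]
    _ = ∫⁻ η : V, ∫⁻ h : V, ENNReal.ofReal (2 * (1 - cos ⟪(2 * π) • η, h⟫) / ‖h‖ ^ d) *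
          ENNReal.ofReal (‖FourierTransform.fourier u η‖ ^ 2) :=
      lintegral_lintegral_swap (by fun_prop)
    _ = _ := by
      refine lintegral_congr fun η => ?_
      rw [lintegral_mul_const _ (by fun_prop), lintegral_one_sub_cos_div_rpow_norm hs,
        ← ENNReal.ofReal_mul (by positivity)]

lemma lintegral_comp_two_pi_smul (g : V → ℝ≥0∞) :
    ∫⁻ ξ, g ξ = ∫⁻ η : V, ENNReal.ofReal ((2 * π) ^ Module.finrank ℝ V) * g ((2 * π) • η) := by
  have h2 : (2 * π) ≠ 0 := by positivity
  have hemb : MeasurableEmbedding fun η : V => (2 * π) • η :=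
    (Homeomorph.smulOfNeZero (2 * π) h2).measurableEmbedding
  rw [lintegral_const_mul' _ _ ENNReal.ofReal_ne_top, ← hemb.lintegral_map,
    Measure.map_addHaar_smul _ h2, lintegral_smul_measure, smul_eq_mul, ← mul_assoc,
    ← ENNReal.ofReal_mul (by positivity), abs_of_pos (by positivity),
    mul_inv_cancel₀ (by positivity), ENNReal.ofReal_one, one_mul]

end InnerProductSpace

lemma norm_FT_two_pi_smul_sq {n : ℕ} (u : SchwartzMap (EuclideanSpace ℝ (Fin n)) ℂ)
    (η : EuclideanSpace ℝ (Fin n)) :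
    ‖FT u ((2 * π) • η)‖ ^ 2 = ((2 * π) ^ n)⁻¹ * ‖FourierTransform.fourier u η‖ ^ 2 := by
  have hint : ∫ x : EuclideanSpace ℝ (Fin n),
      Complex.exp (-Complex.I * ((⟪(2 * π) • η, x⟫ : ℝ) : ℂ)) * u x =
      FourierTransform.fourier u η := by
    rw [SchwartzMap.fourier_coe, Real.fourier_eq']
    refine integral_congr_ae (ae_of_all _ fun x => ?_)
    simp only [smul_eq_mul, inner_smul_left, real_inner_comm]
    congr 2
    simp
    ring
  rw [FT, hint, norm_mul, mul_pow, Complex.norm_real, norm_of_nonneg (by positivity),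
    ← rpow_mul_natCast (by positivity), ← rpow_natCast (2 * π) n, ← rpow_neg (by positivity)]
  congr 2
  push_cast; ring

/-- For Schwartz `u` and `s ∈ (0,1)`,
`∫ |ξ|^{2s}|𝓕u(ξ)|² dξ = c_{n,s} ∬ |u(x)-u(y)|²/|x-y|^{n+2s} dx dy`. -/
theorem stmt7 {n : ℕ} (hn : 1 ≤ n) (s : ℝ) (hs : s ∈ Set.Ioo (0 : ℝ) 1)
    (u : SchwartzMap (EuclideanSpace ℝ (Fin n)) ℂ) :
    (∫⁻ ξ : EuclideanSpace ℝ (Fin n),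
        ENNReal.ofReal (‖ξ‖ ^ (2 * s) * ‖FT (⇑u) ξ‖ ^ 2)) =
    ENNReal.ofReal (cns n s) *
      ∫⁻ p : EuclideanSpace ℝ (Fin n) × EuclideanSpace ℝ (Fin n),
        ENNReal.ofReal (‖u p.1 - u p.2‖ ^ 2 / ‖p.1 - p.2‖ ^ ((n : ℝ) + 2 * s)) := by
  have hc := cns_pos n hs
  have hmain := lintegral_gagliardo_eq_lintegral_fourier hs u
  rw [finrank_euclideanSpace_fin] at hmain
  rw [hmain, ← lintegral_const_mul' _ _ ENNReal.ofReal_ne_top, lintegral_comp_two_pi_smul]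
  refine lintegral_congr fun η => ?_
  rw [finrank_euclideanSpace_fin, ← ENNReal.ofReal_mul (by positivity),
    ← ENNReal.ofReal_mul hc.le, norm_FT_two_pi_smul_sq]
  congr 1
  field_simp
end

section
/- Let n ≥ 1 and s ∈ (0,1). Let u : ℝⁿ → ℝ be bounded and continuous. Then for every x ∈ ℝⁿ, lim_{y→0⁺} (1/d_{n,s}) ∫_{ℝⁿ} y^{2s} u(ξ) (|x-ξ|² + y²)^{-(n+2s)/2} dξ = u(x), where d_{n,s} = ∫_{ℝⁿ} (|z|²+1)^{-(n+2s)/2} dz. -/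
open MeasureTheory Real Filter
open scoped ENNReal Topology

/-- The profile `(|z|² + 1)^{-(n+2s)/2}` of the Poisson kernel is integrable on `ℝⁿ` for `s > 0`. -/
lemma integrable_poissonProfile (n : ℕ) {s : ℝ} (hs : 0 < s) :
    Integrable fun z : EuclideanSpace ℝ (Fin n) =>
      (‖z‖ ^ 2 + 1) ^ (-((n : ℝ) + 2 * s) / 2) := by
  have h := integrable_rpow_neg_one_add_norm_sq (E := EuclideanSpace ℝ (Fin n)) (μ := volume)
    (r := (n : ℝ) + 2 * s) (by simpa using hs)
  simpa only [add_comm (1 : ℝ)] using h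

/-- The integral of the profile of the Poisson kernel is positive. -/
lemma integral_poissonProfile_pos (n : ℕ) {s : ℝ} (hs : 0 < s) :
    0 < ∫ z : EuclideanSpace ℝ (Fin n), (‖z‖ ^ 2 + 1) ^ (-((n : ℝ) + 2 * s) / 2) := by
  have hpos : ∀ z : EuclideanSpace ℝ (Fin n), 0 < (‖z‖ ^ 2 + 1) ^ (-((n : ℝ) + 2 * s) / 2) :=
    fun z => by positivity
  rw [integral_pos_iff_support_of_nonneg (fun z => (hpos z).le) (integrable_poissonProfile n hs),
    Function.support_eq_univ fun z => (hpos z).ne']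
  exact Measure.measure_univ_pos.2 (NeZero.ne _)

/-- The Poisson integral at height `y > 0`, rescaled by `ξ = x - y z`. -/
lemma integral_poissonKernel_eq {n : ℕ} (s : ℝ) (u : EuclideanSpace ℝ (Fin n) → ℝ)
    (x : EuclideanSpace ℝ (Fin n)) {y : ℝ} (hy : 0 < y) :
    ∫ ξ : EuclideanSpace ℝ (Fin n),
        y ^ (2 * s) * u ξ * (‖x - ξ‖ ^ 2 + y ^ 2) ^ (-((n : ℝ) + 2 * s) / 2) =
      ∫ z : EuclideanSpace ℝ (Fin n),
        u (x - y • z) * (‖z‖ ^ 2 + 1) ^ (-((n : ℝ) + 2 * s) / 2) := by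
  have hscale : ∀ z : EuclideanSpace ℝ (Fin n),
      u (x - y • z) * (‖z‖ ^ 2 + 1) ^ (-((n : ℝ) + 2 * s) / 2) =
        y ^ n * (y ^ (2 * s) * u (x - y • z) *
          (‖y • z‖ ^ 2 + y ^ 2) ^ (-((n : ℝ) + 2 * s) / 2)) := fun z => by
    have hnorm : ‖y • z‖ ^ 2 + y ^ 2 = y ^ 2 * (‖z‖ ^ 2 + 1) := by
      rw [norm_smul, Real.norm_of_nonneg hy.le]
      ring
    have hpow : y ^ n * y ^ (2 * s) * (y ^ 2) ^ (-((n : ℝ) + 2 * s) / 2) = 1 := by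
      rw [← rpow_natCast y n, ← rpow_natCast y 2, ← rpow_mul hy.le, ← rpow_add hy, ← rpow_add hy]
      convert rpow_zero y using 2
      push_cast
      ring
    rw [hnorm, mul_rpow (by positivity) (by positivity)]
    linear_combination
      (-(u (x - y • z) * (‖z‖ ^ 2 + 1) ^ (-((n : ℝ) + 2 * s) / 2))) * hpow
  simp_rw [hscale]
  rw [integral_const_mul, Measure.integral_comp_smul_of_nonneg volume
    (fun w => y ^ (2 * s) * u (x - w) * (‖w‖ ^ 2 + y ^ 2) ^ (-((n : ℝ) + 2 * s) / 2)) y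
    (hR := hy.le), finrank_euclideanSpace_fin, smul_eq_mul,
    mul_inv_cancel_left₀ (pow_pos hy n).ne', ← integral_sub_left_eq_self _ volume x]
  simp only [sub_sub_cancel]

/-- For `s ∈ (0,1)` and bounded continuous `u : ℝⁿ → ℝ`, the normalized
Caffarelli–Silvestre extension attains the boundary value:
`(1/d_{n,s}) ∫ y^{2s} u(ξ)(|x-ξ|²+y²)^{-(n+2s)/2} dξ → u(x)` as `y → 0⁺`,
where `d_{n,s} = ∫ (|z|²+1)^{-(n+2s)/2} dz`. -/
theorem stmt10 {n : ℕ} (hn : 1 ≤ n) (s : ℝ) (hs : s ∈ Set.Ioo (0 : ℝ) 1)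
    (u : EuclideanSpace ℝ (Fin n) → ℝ) (hcont : Continuous u)
    (hbdd : ∃ C : ℝ, ∀ x, |u x| ≤ C)
    (x : EuclideanSpace ℝ (Fin n)) :
    Tendsto
      (fun y : ℝ =>
        (1 / ∫ z : EuclideanSpace ℝ (Fin n), (‖z‖ ^ 2 + 1) ^ (-((n : ℝ) + 2 * s) / 2)) *
          ∫ ξ : EuclideanSpace ℝ (Fin n),
            y ^ (2 * s) * u ξ * (‖x - ξ‖ ^ 2 + y ^ 2) ^ (-((n : ℝ) + 2 * s) / 2))
      (𝓝[>] 0) (𝓝 (u x)) := by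
  obtain ⟨C, hC⟩ := hbdd
  have hd := integral_poissonProfile_pos n hs.1
  have hlim : Tendsto (fun y : ℝ => ∫ z : EuclideanSpace ℝ (Fin n),
      u (x - y • z) * (‖z‖ ^ 2 + 1) ^ (-((n : ℝ) + 2 * s) / 2)) (𝓝[>] 0)
      (𝓝 (∫ z : EuclideanSpace ℝ (Fin n),
        u x * (‖z‖ ^ 2 + 1) ^ (-((n : ℝ) + 2 * s) / 2))) := by
    refine tendsto_integral_filter_of_dominated_convergence
      (fun z => C * (‖z‖ ^ 2 + 1) ^ (-((n : ℝ) + 2 * s) / 2)) (.of_forall fun y => ?_)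
      (.of_forall fun y => .of_forall fun z => ?_)
      ((integrable_poissonProfile n hs.1).const_mul C) (.of_forall fun z => ?_)
    · exact (Continuous.aestronglyMeasurable (by fun_prop)).mul
        (integrable_poissonProfile n hs.1).aestronglyMeasurable
    · rw [norm_mul, Real.norm_of_nonneg (r := (‖z‖ ^ 2 + 1) ^ _) (by positivity)]
      gcongr
      exact hC _
    · have hu : Continuous fun y : ℝ => u (x - y • z) := by fun_prop
      have := (hu.tendsto 0).mono_left (nhdsWithin_le_nhds (s := Set.Ioi 0))
      simp only [zero_smul, sub_zero] at this
      exact this.mul_const _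
  have := hlim.const_mul
    (1 / ∫ z : EuclideanSpace ℝ (Fin n), (‖z‖ ^ 2 + 1) ^ (-((n : ℝ) + 2 * s) / 2))
  rw [integral_const_mul, mul_left_comm, one_div_mul_cancel hd.ne', mul_one] at this
  refine this.congr' ?_
  filter_upwards [self_mem_nhdsWithin] with y hy
  rw [integral_poissonKernel_eq s u x hy]
end

section
/- Let n ≥ 1 and s ∈ (0,1). Define P(x,y) = y^{2s} (|x|² + y²)^{-(n+2s)/2} for x ∈ ℝⁿ, y > 0. Then for every x ∈ ℝⁿ and y > 0, y·Δ_x P(x,y) + (1-2s)·∂_y P(x,y) + y·∂²_{yy} P(x,y) = 0; equivalently, div(y^{1-2s} ∇P) = 0 on ℝⁿ × (0,∞), where ∇ is the full gradient in (x,y). -/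
open MeasureTheory Real Filter
open scoped ENNReal

section NormSqRpow

variable {E : Type*} [NormedAddCommGroup E] [InnerProductSpace ℝ E]

lemma hasFDerivAt_norm_sq_add_rpow {c : ℝ} (hc : 0 < c) (a : ℝ) (x : E) :
    HasFDerivAt (fun x : E => (‖x‖ ^ 2 + c) ^ a)
      ((2 * a * (‖x‖ ^ 2 + c) ^ (a - 1)) • innerSL ℝ x) x := by
  have hpos : 0 < ‖x‖ ^ 2 + c := by positivity
  have hsq : HasFDerivAt (fun x : E => ‖x‖ ^ 2 + c) ((2 : ℕ) • innerSL ℝ x) x :=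
    (hasStrictFDerivAt_norm_sq x).hasFDerivAt.add_const c
  convert hsq.rpow_const (p := a) (Or.inl hpos.ne') using 1
  ext v
  simp
  ring

lemma iteratedFDeriv_two_const_mul_norm_sq_add_rpow {c : ℝ} (hc : 0 < c) (k a : ℝ) (x v w : E) :
    iteratedFDeriv ℝ 2 (fun x : E => k * (‖x‖ ^ 2 + c) ^ a) x ![v, w] =
      k * (2 * a * (‖x‖ ^ 2 + c) ^ (a - 1) * inner ℝ v w +
        4 * a * (a - 1) * (‖x‖ ^ 2 + c) ^ (a - 2) * (inner ℝ x v * inner ℝ x w)) := by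
  have hfderiv : fderiv ℝ (fun x : E => k * (‖x‖ ^ 2 + c) ^ a) =
      fun x => (k * (2 * a) * (‖x‖ ^ 2 + c) ^ (a - 1)) • innerSL ℝ x := by
    funext z
    rw [((hasFDerivAt_norm_sq_add_rpow hc a z).const_mul k).fderiv, smul_smul]
    ring_nf
  have hsecond := ((hasFDerivAt_norm_sq_add_rpow hc (a - 1) x).const_mul (k * (2 * a))).fun_smul
    (innerSL ℝ (E := E)).hasFDerivAt
  rw [iteratedFDeriv_two_apply, hfderiv, hsecond.fderiv]
  simp [show a - 1 - 1 = a - 2 by ring]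
  rw [innerSL_apply_apply ℝ v w, innerSL_apply_apply ℝ x w]
  ring

end NormSqRpow

lemma hasDerivAt_rpow_mul_add_sq_rpow {r : ℝ} (hr : 0 ≤ r) (b a : ℝ) {t : ℝ} (ht : 0 < t) :
    HasDerivAt (fun t : ℝ => t ^ b * (r + t ^ 2) ^ a)
      (b * (t ^ (b - 1) * (r + t ^ 2) ^ a) + 2 * a * (t ^ (b + 1) * (r + t ^ 2) ^ (a - 1))) t := by
  have hpos : 0 < r + t ^ 2 := by positivity
  have hsq : HasDerivAt (fun t : ℝ => r + t ^ 2) (2 * t) t := by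
    simpa using (hasDerivAt_pow 2 t).const_add r
  refine ((hasDerivAt_rpow_const (p := b) (Or.inl ht.ne')).fun_mul
    (hsq.rpow_const (p := a) (Or.inl hpos.ne'))).congr_deriv ?_
  rw [rpow_add_one ht.ne']
  ring

lemma deriv_deriv_rpow_mul_add_sq_rpow {r : ℝ} (hr : 0 ≤ r) (b a : ℝ) {t : ℝ} (ht : 0 < t) :
    deriv (deriv fun t : ℝ => t ^ b * (r + t ^ 2) ^ a) t =
      b * (b - 1) * (t ^ (b - 2) * (r + t ^ 2) ^ a) +
        2 * a * (2 * b + 1) * (t ^ b * (r + t ^ 2) ^ (a - 1)) +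
        4 * a * (a - 1) * (t ^ (b + 2) * (r + t ^ 2) ^ (a - 2)) := by
  have hfirst : deriv (fun t : ℝ => t ^ b * (r + t ^ 2) ^ a) =ᶠ[nhds t] fun t =>
      b * (t ^ (b - 1) * (r + t ^ 2) ^ a) + 2 * a * (t ^ (b + 1) * (r + t ^ 2) ^ (a - 1)) := by
    filter_upwards [lt_mem_nhds ht] with u hu
    exact (hasDerivAt_rpow_mul_add_sq_rpow hr b a hu).deriv
  have hsecond := ((hasDerivAt_rpow_mul_add_sq_rpow hr (b - 1) a ht).const_mul b).add
    ((hasDerivAt_rpow_mul_add_sq_rpow hr (b + 1) (a - 1) ht).const_mul (2 * a))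
  rw [hfirst.deriv_eq]
  refine hsecond.deriv.trans ?_
  rw [show b - 1 - 1 = b - 2 by ring, show b - 1 + 1 = b by ring, show b + 1 - 1 = b by ring,
    show b + 1 + 1 = b + 2 by ring, show a - 1 - 1 = a - 2 by ring]
  ring

/-- The Caffarelli–Silvestre Poisson kernel `P(x,y) = y^{2s}(|x|²+y²)^{-(n+2s)/2}`
satisfies `y·Δₓ P + (1-2s)·∂_y P + y·∂²_{yy} P = 0` on `ℝⁿ × (0,∞)`, i.e.
`div(y^{1-2s} ∇P) = 0` there. -/
theorem stmt11 {n : ℕ} (hn : 1 ≤ n) (s : ℝ) (hs : s ∈ Set.Ioo (0 : ℝ) 1)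
    (P : EuclideanSpace ℝ (Fin n) → ℝ → ℝ)
    (hP : ∀ (x : EuclideanSpace ℝ (Fin n)) (y : ℝ),
      P x y = y ^ (2 * s) * (‖x‖ ^ 2 + y ^ 2) ^ (-((n : ℝ) + 2 * s) / 2))
    (x : EuclideanSpace ℝ (Fin n)) (y : ℝ) (hy : 0 < y) :
    y * (∑ i : Fin n,
        iteratedFDeriv ℝ 2 (fun x' => P x' y) x
          ![EuclideanSpace.basisFun (Fin n) ℝ i, EuclideanSpace.basisFun (Fin n) ℝ i])
      + (1 - 2 * s) * deriv (fun t => P x t) y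
      + y * deriv (deriv (fun t => P x t)) y = 0 := by
  simp only [hP]
  have hr : 0 ≤ ‖x‖ ^ 2 := by positivity
  have hQ : 0 < ‖x‖ ^ 2 + y ^ 2 := by positivity
  obtain ⟨a, ha⟩ : ∃ a, a = -((n : ℝ) + 2 * s) / 2 := ⟨_, rfl⟩
  rw [← ha, (hasDerivAt_rpow_mul_add_sq_rpow hr (2 * s) a hy).deriv,
    deriv_deriv_rpow_mul_add_sq_rpow hr (2 * s) a hy]
  simp only [iteratedFDeriv_two_const_mul_norm_sq_add_rpow (pow_pos hy 2)]
  have hunit (i : Fin n) : inner ℝ (EuclideanSpace.basisFun (Fin n) ℝ i)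
      (EuclideanSpace.basisFun (Fin n) ℝ i) = (1 : ℝ) := by simp
  have hparseval : ∑ i : Fin n, inner ℝ x (EuclideanSpace.basisFun (Fin n) ℝ i) *
      inner ℝ x (EuclideanSpace.basisFun (Fin n) ℝ i) = ‖x‖ ^ 2 := by
    simp [EuclideanSpace.real_norm_sq_eq, EuclideanSpace.inner_single_right, ← sq]
  simp only [hunit]
  rw [← Finset.mul_sum, Finset.sum_add_distrib, ← Finset.mul_sum, ← Finset.mul_sum, hparseval,
    Finset.sum_const, Finset.card_univ, Fintype.card_fin, nsmul_eq_mul]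
  have hy1 : y ^ (2 * s - 1) = y ^ (2 * s - 2) * y := by
    rw [← rpow_add_one hy.ne']; ring_nf
  have hy2 : y ^ (2 * s) = y ^ (2 * s - 2) * y ^ 2 := by
    rw [← rpow_add_natCast hy.ne']; norm_num
  have hy3 : y ^ (2 * s + 1) = y ^ (2 * s - 2) * y ^ 3 := by
    rw [rpow_add_one hy.ne', hy2]; ring
  have hy4 : y ^ (2 * s + 2) = y ^ (2 * s - 2) * y ^ 4 := by
    rw [← rpow_add_natCast hy.ne']; norm_num; ring_nf
  have hQ1 : (‖x‖ ^ 2 + y ^ 2) ^ (a - 1) =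
      (‖x‖ ^ 2 + y ^ 2) ^ (a - 2) * (‖x‖ ^ 2 + y ^ 2) := by
    rw [← rpow_add_one hQ.ne']; ring_nf
  have hn' : (n : ℝ) = -2 * a - 2 * s := by rw [ha]; ring
  rw [hy1, hy3, hy4, hy2, hQ1, hn']
  ring
end

section
/- Let n ≥ 1 and s ∈ (0,1). Let u : ℝⁿ → ℝ be continuous with compact support, and let w_u(x,y) = ∫_{ℝⁿ} y^{2s} u(ξ) (|x-ξ|² + y²)^{-(n+2s)/2} dξ for x ∈ ℝⁿ, y > 0. Then w_u is smooth on ℝⁿ × (0,∞) and satisfies Δ_x w_u + ((1-2s)/y) ∂_y w_u + ∂²_{yy} w_u = 0 there; equivalently, div(y^{1-2s} ∇w_u) = 0 on the half-space ℝⁿ × (0,∞). -/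
open MeasureTheory Real Filter
open scoped ENNReal

open scoped Convolution in
/-- Integrating a kernel that is smooth in all its variables against a continuous compactly
supported function yields a smooth function of the parameter. -/
theorem contDiffOn_integral_mul_of_hasCompactSupport {P E : Type*}
    [NormedAddCommGroup P] [NormedSpace ℝ P]
    [NormedAddCommGroup E] [InnerProductSpace ℝ E] [FiniteDimensional ℝ E]
    [MeasurableSpace E] [BorelSpace E] {μ : Measure E} [IsLocallyFiniteMeasure μ]
    {U : Set P} (hU : IsOpen U) {K : P → E → ℝ} {u : E → ℝ}
    (hK : ContDiffOn ℝ (⊤ : ℕ∞) (fun q : P × E => K q.1 q.2) (U ×ˢ Set.univ))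
    (hu : Continuous u) (hsupp : HasCompactSupport u) :
    ContDiffOn ℝ (⊤ : ℕ∞) (fun p => ∫ ξ, K p ξ * u ξ ∂μ) U := by
  obtain ⟨R, hR0, hR⟩ := hsupp.isCompact.isBounded.subset_closedBall_lt 0 (0 : E)
  let χ : ContDiffBump (0 : E) := ⟨R, R + 1, hR0, by linarith⟩
  have hg : ContDiffOn ℝ (⊤ : ℕ∞) (fun q : P × E => K q.1 (-q.2) * χ q.2) (U ×ˢ Set.univ) := by
    refine ContDiffOn.mul ?_ (χ.contDiff.comp contDiff_snd).contDiffOn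
    exact hK.comp (f := fun q : P × E => (q.1, -q.2)) (by fun_prop) fun q hq => ⟨hq.1, trivial⟩
  have hconv := contDiffOn_convolution_right_with_param (μ := μ) (ContinuousLinearMap.mul ℝ ℝ)
    (g := fun p x => K p (-x) * χ x) (f := u) (k := Metric.closedBall 0 (R + 1)) hU
    (isCompact_closedBall _ _)
    (fun p x _ hx => by
      rw [χ.zero_of_le_dist (by simpa [χ] using (not_le.1 (mt Metric.mem_closedBall.2 hx)).le), mul_zero])
    hu.locallyIntegrable hg
  have hcomp := hconv.comp (f := fun p : P => (p, (0 : E))) (s := U) (by fun_prop)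
    fun p hp => ⟨hp, trivial⟩
  refine hcomp.congr fun p hp => ?_
  simp only [Function.comp_apply, convolution_def, ContinuousLinearMap.mul_apply']
  refine integral_congr_ae (Eventually.of_forall fun ξ => ?_)
  by_cases hξ : u ξ = 0
  · simp [hξ]
  · have hmem : ξ ∈ Metric.closedBall (0 : E) R := hR (subset_tsupport u hξ)
    have hone : χ (-ξ) = 1 := χ.one_of_mem_closedBall (by simpa [χ] using hmem)
    simp only [zero_sub, neg_neg, hone, mul_one]
    exact mul_comm _ _

/-- Differentiation under the integral sign for a kernel integrated against a continuous
compactly supported function. -/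
theorem hasDerivAt_integral_mul_of_hasCompactSupport {E : Type*}
    [TopologicalSpace E] [MeasurableSpace E] [OpensMeasurableSpace E] {μ : Measure E}
    [IsFiniteMeasureOnCompacts μ] {U : Set ℝ} (hU : IsOpen U) {k k' : ℝ → E → ℝ} {u : E → ℝ}
    (hu : Continuous u) (hsupp : HasCompactSupport u)
    (hk : ∀ t ∈ U, Continuous (k t))
    (hk' : ContinuousOn (fun q : ℝ × E => k' q.1 q.2) (U ×ˢ Set.univ))
    (hderiv : ∀ t ∈ U, ∀ ξ, HasDerivAt (fun r => k r ξ) (k' t ξ) t) {t : ℝ} (ht : t ∈ U) :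
    Integrable (fun ξ => k' t ξ * u ξ) μ ∧
      HasDerivAt (fun r => ∫ ξ, k r ξ * u ξ ∂μ) (∫ ξ, k' t ξ * u ξ ∂μ) t := by
  obtain ⟨ε, hε, hball⟩ := Metric.nhds_basis_closedBall.mem_iff.1 (hU.mem_nhds ht)
  obtain ⟨C, hC⟩ := ((isCompact_closedBall t ε).prod hsupp.isCompact).exists_bound_of_continuousOn
    (hk'.mono (Set.prod_mono hball (Set.subset_univ _)))
  have hint : ∀ {f : E → ℝ}, Continuous f → Integrable (fun ξ => f ξ * u ξ) μ := fun hf =>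
    (hf.mul hu).integrable_of_hasCompactSupport hsupp.mul_left
  have hk't : Continuous (k' t) :=
    continuousOn_univ.1 (hk'.comp (f := fun ξ : E => (t, ξ)) (by fun_prop)
      fun ξ _ => ⟨ht, trivial⟩)
  refine hasDerivAt_integral_of_dominated_loc_of_deriv_le 
    (F' := fun r ξ => k' r ξ * u ξ) (bound := fun ξ => C * ‖u ξ‖)
    (Metric.closedBall_mem_nhds t hε) ?_ (hint (hk t ht)) (hint hk't).aestronglyMeasurable ?_ ?_ ?_
  · filter_upwards [hU.mem_nhds ht] with r hr using (hint (hk r hr)).aestronglyMeasurable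
  · refine Eventually.of_forall fun ξ r hr => ?_
    by_cases hξ : u ξ = 0
    · simp [hξ]
    · rw [norm_mul]
      exact mul_le_mul_of_nonneg_right (hC (r, ξ) ⟨hr, subset_tsupport u hξ⟩) (norm_nonneg _)
  · exact (hu.integrable_of_hasCompactSupport hsupp).norm.const_mul C
  · exact Eventually.of_forall fun ξ r hr => (hderiv r (hball hr) ξ).mul_const (u ξ)

section Kernel

theorem norm_sq_add_sq_pos {E : Type*} [SeminormedAddCommGroup E] (z : E) {y : ℝ} (hy : 0 < y) :
    0 < ‖z‖ ^ 2 + y ^ 2 := by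
  positivity

theorem hasDerivAt_rpow_mul_norm_sq_add_sq_rpow {E : Type*} [SeminormedAddCommGroup E] (z : E)
    {y : ℝ} (hy : 0 < y) (b a : ℝ) :
    HasDerivAt (fun t : ℝ => t ^ b * (‖z‖ ^ 2 + t ^ 2) ^ a)
      (b * (y ^ (b - 1) * (‖z‖ ^ 2 + y ^ 2) ^ a)
        + 2 * a * (y ^ (b + 1) * (‖z‖ ^ 2 + y ^ 2) ^ (a - 1))) y := by
  have hsq : HasDerivAt (fun t : ℝ => ‖z‖ ^ 2 + t ^ 2) (2 * y) y := by
    simpa using (hasDerivAt_pow 2 y).const_add (‖z‖ ^ 2)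
  refine ((Real.hasDerivAt_rpow_const (p := b) (Or.inl hy.ne')).mul
    (hsq.rpow_const (p := a) (Or.inl (norm_sq_add_sq_pos z hy).ne'))).congr_deriv ?_
  rw [Real.rpow_add_one hy.ne']
  ring

variable {E : Type*} [NormedAddCommGroup E] [InnerProductSpace ℝ E]

theorem hasDerivAt_norm_sq_add_sq_rpow_line (z e : E) {y : ℝ} (hy : 0 < y) (a t : ℝ) :
    HasDerivAt (fun r : ℝ => (‖z + r • e‖ ^ 2 + y ^ 2) ^ a)
      (2 * a * (inner ℝ (z + t • e) e * (‖z + t • e‖ ^ 2 + y ^ 2) ^ (a - 1))) t := by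
  have h : HasDerivAt (fun r : ℝ => z + r • e) e t := by
    simpa using ((hasDerivAt_id t).smul_const e).const_add z
  exact ((h.norm_sq.add_const (y ^ 2)).rpow_const (p := a)
    (Or.inl (norm_sq_add_sq_pos (z + t • e) hy).ne')).congr_deriv (by ring)

theorem hasDerivAt_inner_mul_norm_sq_add_sq_rpow_line (z e : E) {y : ℝ} (hy : 0 < y) (a t : ℝ) :
    HasDerivAt (fun r : ℝ => inner ℝ (z + r • e) e * (‖z + r • e‖ ^ 2 + y ^ 2) ^ a)
      (‖e‖ ^ 2 * (‖z + t • e‖ ^ 2 + y ^ 2) ^ a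
        + 2 * a * inner ℝ (z + t • e) e ^ 2 * (‖z + t • e‖ ^ 2 + y ^ 2) ^ (a - 1)) t := by
  have h : HasDerivAt (fun r : ℝ => z + r • e) e t := by
    simpa using ((hasDerivAt_id t).smul_const e).const_add z
  have hinner : HasDerivAt (fun r : ℝ => inner ℝ (z + r • e) e) (‖e‖ ^ 2) t := by
    simpa using h.inner ℝ (hasDerivAt_const t e)
  exact (hinner.mul (hasDerivAt_norm_sq_add_sq_rpow_line z e hy a t)).congr_deriv (by ring)

theorem contDiffOn_rpow_mul_norm_sq_add_sq_rpow (b a : ℝ) {m : WithTop ℕ∞} :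
    ContDiffOn ℝ m (fun q : E × ℝ => q.2 ^ b * (‖q.1‖ ^ 2 + q.2 ^ 2) ^ a) {q | 0 < q.2} := by
  refine ContDiffOn.mul ?_ ?_
  · exact contDiffOn_snd.rpow_const_of_ne fun q hq => ne_of_gt hq
  · refine ContDiffOn.rpow_const_of_ne ?_ fun q hq => (norm_sq_add_sq_pos q.1 hq).ne'
    exact ((contDiff_fst.norm_sq ℝ).add (contDiff_snd.pow 2)).contDiffOn

end Kernel

/-- The second derivative of a `C²` function along a direction, computed from derivatives along
lines. -/
theorem iteratedFDeriv_two_eq_of_hasDerivAt_line {E : Type*} [NormedAddCommGroup E]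
    [NormedSpace ℝ E] {f f' : E → ℝ} {c : ℝ} {x e : E} (hf : ContDiff ℝ 2 f)
    (h₁ : ∀ z, HasDerivAt (fun t : ℝ => f (z + t • e)) (f' z) 0)
    (h₂ : HasDerivAt (fun t : ℝ => f' (x + t • e)) c 0) :
    iteratedFDeriv ℝ 2 f x ![e, e] = c := by
  have hline : ∀ z, HasDerivAt (fun t : ℝ => z + t • e) e 0 := fun z => by
    simpa using ((hasDerivAt_id (0 : ℝ)).smul_const e).const_add z
  have hf' : f' = fun z => fderiv ℝ f z e := by
    funext z
    have hd : HasFDerivAt f (fderiv ℝ f z) (z + (0 : ℝ) • e) := by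
      simpa using (hf.differentiable (by norm_num) z).hasFDerivAt
    exact (h₁ z).unique (hd.comp_hasDerivAt 0 (hline z))
  have hfd : DifferentiableAt ℝ (fderiv ℝ f) x :=
    (hf.fderiv_right (m := 1) (by norm_num)).differentiable (by norm_num) x
  have hd : HasFDerivAt f' ((fderiv ℝ (fderiv ℝ f) x).flip e) (x + (0 : ℝ) • e) := by
    rw [hf', zero_smul, add_zero]
    simpa using hfd.hasFDerivAt.clm_apply (hasFDerivAt_const e x)
  rw [iteratedFDeriv_two_apply]
  exact HasDerivAt.unique (f₀' := (fderiv ℝ (fderiv ℝ f) x).flip e e)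
    (hd.comp_hasDerivAt 0 (hline x)) h₂

/-- The kernel `y ^ (2s) (|z|² + y²) ^ (-(n + 2s)/2)` solves the extension equation. -/
theorem poissonKernel_extension_equation {n : ℕ} (s : ℝ) (z : EuclideanSpace ℝ (Fin n)) {y a : ℝ}
    (hy : 0 < y) (ha : a = -((n : ℝ) + 2 * s) / 2) :
    (∑ i : Fin n, y ^ (2 * s) * (2 * a * ((‖z‖ ^ 2 + y ^ 2) ^ (a - 1)
        + 2 * (a - 1) * z i ^ 2 * (‖z‖ ^ 2 + y ^ 2) ^ (a - 1 - 1))))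
      + (1 - 2 * s) / y * (2 * s * (y ^ (2 * s - 1) * (‖z‖ ^ 2 + y ^ 2) ^ a)
        + 2 * a * (y ^ (2 * s + 1) * (‖z‖ ^ 2 + y ^ 2) ^ (a - 1)))
      + (2 * s * ((2 * s - 1) * (y ^ (2 * s - 1 - 1) * (‖z‖ ^ 2 + y ^ 2) ^ a)
          + 2 * a * (y ^ (2 * s - 1 + 1) * (‖z‖ ^ 2 + y ^ 2) ^ (a - 1)))
        + 2 * a * ((2 * s + 1) * (y ^ (2 * s + 1 - 1) * (‖z‖ ^ 2 + y ^ 2) ^ (a - 1))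
          + 2 * (a - 1) * (y ^ (2 * s + 1 + 1) * (‖z‖ ^ 2 + y ^ 2) ^ (a - 1 - 1)))) = 0 := by
  have hr := norm_sq_add_sq_pos z hy
  have hnorm : ∑ i, z i ^ 2 = ‖z‖ ^ 2 := by simp [EuclideanSpace.norm_sq_eq]
  have hsum : (∑ i : Fin n, y ^ (2 * s) * (2 * a * ((‖z‖ ^ 2 + y ^ 2) ^ (a - 1)
        + 2 * (a - 1) * z i ^ 2 * (‖z‖ ^ 2 + y ^ 2) ^ (a - 1 - 1))))
      = y ^ (2 * s) * (2 * a * (n * (‖z‖ ^ 2 + y ^ 2) ^ (a - 1)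
        + 2 * (a - 1) * ‖z‖ ^ 2 * (‖z‖ ^ 2 + y ^ 2) ^ (a - 1 - 1))) := by
    rw [← hnorm, ← Finset.mul_sum, ← Finset.mul_sum, Finset.sum_add_distrib, ← Finset.sum_mul,
      ← Finset.mul_sum]
    simp
  rw [hsum]
  have hn : (n : ℝ) = -2 * a - 2 * s := by rw [ha]; ring
  simp only [Real.rpow_sub_one hy.ne', Real.rpow_add_one hy.ne', Real.rpow_sub_one hr.ne', hn]
  field_simp
  ring

/-- For `s ∈ (0,1)` and continuous compactly supported `u`, the Caffarelli–Silvestre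
extension `w_u(x,y) = ∫ y^{2s} u(ξ)(|x-ξ|²+y²)^{-(n+2s)/2} dξ` is smooth on
`ℝⁿ × (0,∞)` and satisfies `Δₓ w + ((1-2s)/y) ∂_y w + ∂²_{yy} w = 0` there,
i.e. `div(y^{1-2s}∇w) = 0` on the half-space. -/
theorem stmt12 {n : ℕ} (hn : 1 ≤ n) (s : ℝ) (hs : s ∈ Set.Ioo (0 : ℝ) 1)
    (u : EuclideanSpace ℝ (Fin n) → ℝ) (hcont : Continuous u)
    (hsupp : HasCompactSupport u)
    (w : EuclideanSpace ℝ (Fin n) → ℝ → ℝ)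
    (hw : ∀ (x : EuclideanSpace ℝ (Fin n)) (y : ℝ),
      w x y = ∫ ξ : EuclideanSpace ℝ (Fin n),
        y ^ (2 * s) * u ξ * (‖x - ξ‖ ^ 2 + y ^ 2) ^ (-((n : ℝ) + 2 * s) / 2)) :
    ContDiffOn ℝ (⊤ : ℕ∞) (fun p : EuclideanSpace ℝ (Fin n) × ℝ => w p.1 p.2)
      {p : EuclideanSpace ℝ (Fin n) × ℝ | 0 < p.2} ∧
    ∀ (x : EuclideanSpace ℝ (Fin n)) (y : ℝ), 0 < y →
      (∑ i : Fin n,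
          iteratedFDeriv ℝ 2 (fun x' => w x' y) x
            ![EuclideanSpace.basisFun (Fin n) ℝ i, EuclideanSpace.basisFun (Fin n) ℝ i])
        + ((1 - 2 * s) / y) * deriv (fun t => w x t) y
        + deriv (deriv (fun t => w x t)) y = 0 := by
  obtain ⟨a, ha⟩ : ∃ a : ℝ, a = -((n : ℝ) + 2 * s) / 2 := ⟨_, rfl⟩
  have hw' : w = fun x y => ∫ ξ, y ^ (2 * s) * (‖x - ξ‖ ^ 2 + y ^ 2) ^ a * u ξ := by
    funext x y
    rw [hw, ha]
    exact integral_congr_ae (Eventually.of_forall fun ξ => by ring)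
  subst hw'
  have hsmooth : ContDiffOn ℝ (⊤ : ℕ∞) (fun p : EuclideanSpace ℝ (Fin n) × ℝ =>
        ∫ ξ, p.2 ^ (2 * s) * (‖p.1 - ξ‖ ^ 2 + p.2 ^ 2) ^ a * u ξ) {p | 0 < p.2} := by
    refine contDiffOn_integral_mul_of_hasCompactSupport
      (K := fun (p : EuclideanSpace ℝ (Fin n) × ℝ) ξ =>
        p.2 ^ (2 * s) * (‖p.1 - ξ‖ ^ 2 + p.2 ^ 2) ^ a)
      (isOpen_lt continuous_const continuous_snd) ?_ hcont hsupp
    exact (contDiffOn_rpow_mul_norm_sq_add_sq_rpow (2 * s) a).comp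
      (f := fun q : (EuclideanSpace ℝ (Fin n) × ℝ) × EuclideanSpace ℝ (Fin n) =>
        (q.1.1 - q.2, q.1.2)) (by fun_prop) fun q hq => hq.1
  refine ⟨hsmooth, fun x y hy => ?_⟩
  have hC2 : ContDiff ℝ 2 fun x' : EuclideanSpace ℝ (Fin n) =>
      ∫ ξ, y ^ (2 * s) * (‖x' - ξ‖ ^ 2 + y ^ 2) ^ a * u ξ :=
    contDiffOn_univ.1 ((hsmooth.of_le (WithTop.coe_le_coe.2 (le_top (a := (2 : ℕ∞))))).comp
      (f := fun x' => (x', y)) (by fun_prop) fun _ _ => hy)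
  have hcontK : ∀ b c : ℝ, ContinuousOn
      (fun q : EuclideanSpace ℝ (Fin n) × ℝ => q.2 ^ b * (‖q.1‖ ^ 2 + q.2 ^ 2) ^ c) {q | 0 < q.2} :=
    fun b c => (contDiffOn_rpow_mul_norm_sq_add_sq_rpow b c (m := 0)).continuousOn
  -- the derivatives in the vertical variable
  have hcontY : ∀ b c : ℝ, ContinuousOn
      (fun q : ℝ × EuclideanSpace ℝ (Fin n) => q.1 ^ b * (‖x - q.2‖ ^ 2 + q.1 ^ 2) ^ c)
      (Set.Ioi 0 ×ˢ Set.univ) := fun b c =>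
    (hcontK b c).comp (f := fun q : ℝ × EuclideanSpace ℝ (Fin n) => (x - q.2, q.1))
      (by fun_prop) fun q hq => hq.1
  have hcontYt : ∀ b c t : ℝ, t ∈ Set.Ioi (0 : ℝ) →
      Continuous fun ξ => t ^ b * (‖x - ξ‖ ^ 2 + t ^ 2) ^ c := fun b c t ht =>
    continuousOn_univ.1 ((hcontY b c).comp
      (f := fun ξ : EuclideanSpace ℝ (Fin n) => (t, ξ)) (by fun_prop) fun ξ _ => ⟨ht, trivial⟩)
  have hY₁ := fun t (ht : t ∈ Set.Ioi (0 : ℝ)) =>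
    hasDerivAt_integral_mul_of_hasCompactSupport (μ := volume) isOpen_Ioi hcont hsupp
      (hcontYt (2 * s) a)
      (((hcontY (2 * s - 1) a).const_mul (2 * s)).add
        ((hcontY (2 * s + 1) (a - 1)).const_mul (2 * a)))
      (fun t ht ξ => hasDerivAt_rpow_mul_norm_sq_add_sq_rpow (x - ξ) ht (2 * s) a) ht
  have hY₂ := hasDerivAt_integral_mul_of_hasCompactSupport (μ := volume) isOpen_Ioi hcont hsupp
      (k := fun t ξ => 2 * s * (t ^ (2 * s - 1) * (‖x - ξ‖ ^ 2 + t ^ 2) ^ a)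
        + 2 * a * (t ^ (2 * s + 1) * (‖x - ξ‖ ^ 2 + t ^ 2) ^ (a - 1)))
      (fun t ht => ((hcontYt (2 * s - 1) a t ht).const_mul (2 * s)).add
        ((hcontYt (2 * s + 1) (a - 1) t ht).const_mul (2 * a)))
      ((((hcontY (2 * s - 1 - 1) a).const_mul (2 * s - 1)).add
        ((hcontY (2 * s - 1 + 1) (a - 1)).const_mul (2 * a))).const_mul (2 * s) |>.add <|
        (((hcontY (2 * s + 1 - 1) (a - 1)).const_mul (2 * s + 1)).add
        ((hcontY (2 * s + 1 + 1) (a - 1 - 1)).const_mul (2 * (a - 1)))).const_mul (2 * a))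
      (fun t ht ξ =>
        ((hasDerivAt_rpow_mul_norm_sq_add_sq_rpow (x - ξ) ht (2 * s - 1) a).const_mul (2 * s)).add
        ((hasDerivAt_rpow_mul_norm_sq_add_sq_rpow (x - ξ) ht (2 * s + 1) (a - 1)).const_mul
          (2 * a))) (Set.mem_Ioi.2 hy)
  have hderiv₂ := ((Set.EqOn.eventuallyEq_of_mem (fun t ht => (hY₁ t ht).2.deriv)
    (Ioi_mem_nhds hy)).deriv_eq).trans hY₂.2.deriv
  -- the derivatives in the horizontal directions
  have hcontL : ∀ (c : ℝ) (z e : EuclideanSpace ℝ (Fin n)), Continuous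
      fun q : ℝ × EuclideanSpace ℝ (Fin n) => (‖z - q.2 + q.1 • e‖ ^ 2 + y ^ 2) ^ c := fun c z e =>
    Continuous.rpow_const (by fun_prop) fun q => Or.inl (norm_sq_add_sq_pos _ hy).ne'
  have hX₁ := fun e z : EuclideanSpace ℝ (Fin n) =>
    hasDerivAt_integral_mul_of_hasCompactSupport (μ := volume) isOpen_univ hcont hsupp
      (k := fun t ξ => y ^ (2 * s) * (‖z - ξ + t • e‖ ^ 2 + y ^ 2) ^ a)
      (fun t _ => continuous_const.mul ((hcontL a z e).comp (Continuous.prodMk_right t)))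
      (Continuous.continuousOn (by have := hcontL (a - 1) z e; fun_prop))
      (fun t _ ξ =>
        (hasDerivAt_norm_sq_add_sq_rpow_line (z - ξ) e hy a t).const_mul (y ^ (2 * s)))
      (Set.mem_univ (0 : ℝ))
  have hX₂ := fun e : EuclideanSpace ℝ (Fin n) =>
    hasDerivAt_integral_mul_of_hasCompactSupport (μ := volume) isOpen_univ hcont hsupp
      (k := fun t ξ => y ^ (2 * s) * (2 * a * (inner ℝ (x - ξ + t • e) e *
        (‖x - ξ + t • e‖ ^ 2 + y ^ 2) ^ (a - 1))))
      (fun t _ => by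
        have := (hcontL (a - 1) x e).comp (Continuous.prodMk_right t)
        exact continuous_const.mul (continuous_const.mul (Continuous.mul (by fun_prop) this)))
      (Continuous.continuousOn (by
        have := hcontL (a - 1) x e
        have := hcontL (a - 1 - 1) x e
        fun_prop))
      (fun t _ ξ =>
        ((hasDerivAt_inner_mul_norm_sq_add_sq_rpow_line (x - ξ) e hy (a - 1) t).const_mul
          (2 * a)).const_mul (y ^ (2 * s)))
      (Set.mem_univ (0 : ℝ))
  simp only [zero_smul, add_zero] at hX₁ hX₂
  have hlap := fun i : Fin n => iteratedFDeriv_two_eq_of_hasDerivAt_line (x := x) hC2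
    (fun z => by simpa only [add_sub_right_comm] using
      (hX₁ (EuclideanSpace.basisFun (Fin n) ℝ i) z).2)
    (by simpa only [add_sub_right_comm] using
      (hX₂ (EuclideanSpace.basisFun (Fin n) ℝ i)).2)
  simp only [hlap]
  rw [hderiv₂, (hY₁ y hy).2.deriv, ← integral_finsetSum _ fun i _ => (hX₂ _).1,
    ← integral_const_mul,
    ← integral_add (integrable_finsetSum _ fun i _ => (hX₂ _).1) ((hY₁ y hy).1.const_mul _),
    ← integral_add (Integrable.fun_add (integrable_finsetSum _ fun i _ => (hX₂ _).1)
      ((hY₁ y hy).1.const_mul _)) hY₂.1]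
  refine integral_eq_zero_of_ae (Eventually.of_forall fun ξ => ?_)
  have hpde := poissonKernel_extension_equation s (x - ξ) hy ha
  simp only [EuclideanSpace.basisFun_apply, EuclideanSpace.inner_single_right,
    PiLp.norm_single, Pi.zero_apply]
  rw [← Finset.sum_mul, ← mul_assoc, ← add_mul, ← add_mul]
  refine mul_eq_zero_of_left ?_ _
  simpa using hpde
end

section
/- Let n ≥ 1 and s ∈ (0,1). Let u : ℝⁿ → ℝ be a Schwartz function and let w(x,y) = (1/d_{n,s}) ∫_{ℝⁿ} y^{2s} u(ξ)(|x-ξ|²+y²)^{-(n+2s)/2} dξ be its normalized Caffarelli–Silvestre extension, where d_{n,s} = ∫_{ℝⁿ}(|z|²+1)^{-(n+2s)/2} dz. Then ∫₀^∞ ∫_{ℝⁿ} y^{1-2s} |∇w(x,y)|² dx dy = (2s / C_s) ∫_{ℝⁿ} |ξ|^{2s} |𝓕u(ξ)|² dξ, where C_s = 4^s Γ(1+s)/Γ(1-s) and ∇ is the full gradient in (x,y). -/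
open MeasureTheory Real Filter
open scoped RealInnerProductSpace ENNReal

/-- The constant `C_s = 4^s Γ(1+s)/Γ(1-s)`. -/
noncomputable def Cs (s : ℝ) : ℝ := 4 ^ s * Real.Gamma (1 + s) / Real.Gamma (1 - s)

section Plancherel

open scoped FourierTransform SchwartzMap

variable {E : Type*} [NormedAddCommGroup E] [InnerProductSpace ℝ E] [FiniteDimensional ℝ E]
  [MeasurableSpace E] [BorelSpace E]

/-- The Fourier integral is self-adjoint on integrable functions. -/
theorem integral_fourier_mul_eq {f g : E → ℂ} (hf : Integrable f) (hg : Integrable g) :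
    ∫ ξ, 𝓕 f ξ * g ξ = ∫ x, f x * 𝓕 g x := by
  have h := VectorFourier.integral_fourierIntegral_smul_eq_flip (L := innerₗ E) (f := f) (g := g)
    Real.continuous_fourierChar continuous_inner hf hg
  rw [flip_innerₗ] at h
  exact h

/-- On `L¹ ∩ L²` the Fourier integral represents the `L²` Fourier transform. -/
theorem fourier_toLp_ae_eq {f : E → ℂ} (h1 : Integrable f) (h2 : MemLp f 2) :
    ((𝓕 (h2.toLp f) : Lp ℂ 2 (volume : Measure E)) : E → ℂ) =ᵐ[volume] 𝓕 f := by
  have hcont : Continuous (𝓕 f) :=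
    VectorFourier.fourierIntegral_continuous Real.continuous_fourierChar continuous_inner h1
  refine ae_eq_of_integral_contDiff_smul_eq
    ((Lp.memLp _).locallyIntegrable (by norm_num)) hcont.locallyIntegrable ?_
  intro g hg hgs
  have hgc : HasCompactSupport (fun x => (g x : ℂ)) := hgs.comp_left (g := ((↑) : ℝ → ℂ)) (by simp)
  have hgd : ContDiff ℝ ((⊤ : ℕ∞) : WithTop ℕ∞) (fun x => (g x : ℂ)) :=
    Complex.ofRealCLM.contDiff.comp hg
  let φ : 𝓢(E, ℂ) := hgc.toSchwartzMap hgd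
  have hφ : ∀ x, φ x = (g x : ℂ) := fun x => rfl
  have key := congrArg (fun T => T φ) (Lp.fourier_toTemperedDistribution_eq (h2.toLp f))
  simp only [TemperedDistribution.fourier_apply, Lp.toTemperedDistribution_apply] at key
  have hL : ∫ x, (𝓕 φ) x • (h2.toLp f : Lp ℂ 2 (volume : Measure E)) x = ∫ x, f x * 𝓕 (φ : E → ℂ) x := by
    refine integral_congr_ae ?_
    filter_upwards [h2.coeFn_toLp] with x hx
    rw [hx, smul_eq_mul, mul_comm, SchwartzMap.fourier_coe]
  rw [hL, ← integral_fourier_mul_eq h1 φ.integrable] at key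
  simp only [hφ, smul_eq_mul] at key
  simp only [Complex.real_smul]
  rw [← key]
  exact integral_congr_ae (Eventually.of_forall fun x => mul_comm _ _)

theorem MemLp.integral_norm_sq_eq {f : E → ℂ} (h : MemLp f 2) :
    ∫ x, ‖f x‖ ^ 2 = (eLpNorm f 2).toReal ^ 2 := by
  rw [h.eLpNorm_eq_integral_rpow_norm (by norm_num) (by norm_num), ENNReal.toReal_ofReal (by positivity)]
  simp only [ENNReal.toReal_ofNat, Real.rpow_ofNat]
  rw [← one_div, ← Real.sqrt_eq_rpow, Real.sq_sqrt (by positivity)]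

/-- Plancherel identity for the Fourier integral of a function in `L¹ ∩ L²`. -/
theorem memLp_fourier_and_integral_norm_sq {f : E → ℂ} (h1 : Integrable f) (h2 : MemLp f 2) :
    MemLp (𝓕 f) 2 ∧ ∫ x, ‖𝓕 f x‖ ^ 2 = ∫ x, ‖f x‖ ^ 2 := by
  have hae := fourier_toLp_ae_eq h1 h2
  have hm : MemLp (𝓕 f) 2 := (memLp_congr_ae hae).1 (Lp.memLp _)
  refine ⟨hm, ?_⟩
  rw [MemLp.integral_norm_sq_eq hm, MemLp.integral_norm_sq_eq h2, ← eLpNorm_congr_ae hae,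
    ← Lp.norm_def, Lp.norm_fourier_eq, Lp.norm_toLp]

end Plancherel

section GammaIntegrals

theorem integrableOn_rpow_mul_exp_neg_mul {a b : ℝ} (ha : 0 < a) (hb : 0 < b) :
    IntegrableOn (fun r : ℝ => r ^ (a - 1) * Real.exp (-(b * r))) (Set.Ioi 0) := by
  have h := integrableOn_rpow_mul_exp_neg_mul_rpow (p := 1) (s := a - 1) (b := b)
    (by linarith) one_pos hb
  simpa using h

theorem lintegral_rpow_mul_exp_neg_mul {a b : ℝ} (ha : 0 < a) (hb : 0 < b) :
    ∫⁻ r in Set.Ioi (0 : ℝ), ENNReal.ofReal (r ^ (a - 1) * Real.exp (-(b * r))) =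
      ENNReal.ofReal ((1 / b) ^ a * Real.Gamma a) := by
  rw [← Real.integral_rpow_mul_exp_neg_mul_Ioi ha hb,
    ofReal_integral_eq_lintegral_ofReal (integrableOn_rpow_mul_exp_neg_mul ha hb)]
  filter_upwards [ae_restrict_mem measurableSet_Ioi] with r hr
  have : (0 : ℝ) < r := hr
  positivity

theorem lintegral_rpow_mul_exp_neg_mul_sq {β k : ℝ} (hβ : 0 < β) (hk : 0 < k) :
    ∫⁻ y in Set.Ioi (0 : ℝ), ENNReal.ofReal (y ^ (2 * β - 1) * Real.exp (-k * y ^ 2)) =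
      ENNReal.ofReal (1 / 2 * Real.Gamma β * k ^ (-β)) := by
  have h := integral_rpow_mul_exp_neg_mul_rpow (p := 2) (q := 2 * β - 1) (b := k)
    (by norm_num) (by linarith) hk
  have hi := integrableOn_rpow_mul_exp_neg_mul_rpow (p := 2) (s := 2 * β - 1) (b := k)
    (by linarith) (by norm_num) hk
  simp only [Real.rpow_ofNat] at h hi
  rw [← ofReal_integral_eq_lintegral_ofReal hi, h]
  · congr 1
    rw [show -(2 * β - 1 + 1) / 2 = -β by ring, show (2 * β - 1 + 1) / 2 = β by ring]
    ring
  · filter_upwards [ae_restrict_mem measurableSet_Ioi] with r hr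
    have : (0 : ℝ) < r := hr
    positivity

/-- Integrating a function of `r + q` over the positive quadrant. -/
theorem lintegral_lintegral_comp_add {F : ℝ → ℝ≥0∞} (hF : Measurable F) :
    ∫⁻ r in Set.Ioi (0 : ℝ), ∫⁻ q in Set.Ioi (0 : ℝ), F (r + q) =
      ∫⁻ v in Set.Ioi (0 : ℝ), ENNReal.ofReal v * F v := by
  have h1 : ∀ r : ℝ, ∫⁻ q in Set.Ioi (0 : ℝ), F (r + q) = ∫⁻ v, (Set.Ioi r).indicator F v := by
    intro r
    rw [← lintegral_indicator measurableSet_Ioi,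
      ← lintegral_add_left_eq_self (fun v => (Set.Ioi r).indicator F v) r]
    congr 1 with q
    simp [Set.indicator_apply]
  have hm : MeasurableSet {p : ℝ × ℝ | p.1 < p.2} := measurableSet_lt measurable_fst measurable_snd
  have hmeas : Measurable (Function.uncurry fun r v : ℝ => (Set.Ioi r).indicator F v) := by
    have : (Function.uncurry fun r v : ℝ => (Set.Ioi r).indicator F v) =
        {p : ℝ × ℝ | p.1 < p.2}.indicator (fun p => F p.2) := by
      ext ⟨r, v⟩
      simp [Function.uncurry, Set.indicator_apply]
    rw [this]
    exact (hF.comp measurable_snd).indicator hm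
  simp_rw [h1]
  rw [lintegral_lintegral_swap hmeas.aemeasurable, ← lintegral_indicator measurableSet_Ioi]
  congr 1 with v
  have h2 : ∀ r : ℝ, (Set.Ioi r).indicator F v = (Set.Iio v).indicator (fun _ => F v) r := by
    intro r
    simp [Set.indicator_apply]
  simp_rw [h2]
  rw [lintegral_indicator measurableSet_Iio, lintegral_const, Measure.restrict_restrict
    measurableSet_Iio, Measure.restrict_apply_univ, Set.Iio_inter_Ioi, Real.volume_Ioo]
  by_cases hv : 0 < v
  · simp [hv, mul_comm]
  · simp [hv, ENNReal.ofReal_of_nonpos (not_lt.1 hv)]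

end GammaIntegrals

section BesselIntegral

/-- The integral `∫₀^∞ r^{-β} e^{-r - c y² / r} dr`, a multiple of a power of `y` times a modified
Bessel function of the second kind. -/
noncomputable def besselInt (β c y : ℝ) : ℝ :=
  ∫ r in Set.Ioi (0 : ℝ), r ^ (-β) * Real.exp (-r - c * y ^ 2 / r)

theorem besselInt_nonneg (β c y : ℝ) : 0 ≤ besselInt β c y := by
  refine setIntegral_nonneg measurableSet_Ioi fun r hr => ?_
  have : (0 : ℝ) < r := hr
  positivity

theorem measurable_besselInt (β : ℝ) : Measurable (fun p : ℝ × ℝ => besselInt β p.1 p.2) := by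
  unfold besselInt
  refine StronglyMeasurable.measurable ?_
  refine StronglyMeasurable.integral_prod_right
    (f := fun (p : ℝ × ℝ) (r : ℝ) => r ^ (-β) * Real.exp (-r - p.1 * p.2 ^ 2 / r)) ?_
  refine Measurable.stronglyMeasurable ?_
  fun_prop

theorem integrableOn_besselInt_of_lt_one {β k : ℝ} (hβ : β < 1) (hk : 0 ≤ k) :
    IntegrableOn (fun r : ℝ => r ^ (-β) * Real.exp (-r - k / r)) (Set.Ioi 0) := by
  have h := integrableOn_rpow_mul_exp_neg_mul (a := 1 - β) (b := 1) (by linarith) one_pos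
  refine Integrable.mono' h (by fun_prop) ?_
  filter_upwards [ae_restrict_mem measurableSet_Ioi] with r hr
  have hr' : (0 : ℝ) < r := hr
  rw [Real.norm_of_nonneg (by positivity), show 1 - β - 1 = -β by ring]
  have : 0 ≤ k / r := by positivity
  gcongr
  linarith

theorem rpow_mul_exp_le {β k r : ℝ} (hk : 0 < k) (hr : 0 < r) :
    r ^ (-(β + 1)) * Real.exp (-r - k / r) ≤ 1 / k * (r ^ (-β) * Real.exp (-r)) := by
  have h1 : k / r ≤ Real.exp (k / r) := by linarith [Real.add_one_le_exp (k / r)]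
  have h2 : r ^ (-(β + 1)) = r ^ (-β) / r := by
    rw [show -(β + 1) = -β - 1 by ring, Real.rpow_sub_one hr.ne']
  have h3 : Real.exp (-r - k / r) = Real.exp (-r) / Real.exp (k / r) := Real.exp_sub _ _
  have h4 : 1 / r ≤ 1 / k * Real.exp (k / r) := by
    rw [div_mul_eq_mul_div, le_div_iff₀ hk]
    calc 1 / r * k = k / r := by ring
      _ ≤ _ := by linarith
  rw [h2, h3]
  calc r ^ (-β) / r * (Real.exp (-r) / Real.exp (k / r))
      = r ^ (-β) * Real.exp (-r) * (1 / r) / Real.exp (k / r) := by ring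
    _ ≤ r ^ (-β) * Real.exp (-r) * (1 / k * Real.exp (k / r)) / Real.exp (k / r) := by gcongr
    _ = _ := by field_simp

theorem integrableOn_besselInt_of_pos {β k : ℝ} (hβ : β < 1) (hk : 0 < k) :
    IntegrableOn (fun r : ℝ => r ^ (-(β + 1)) * Real.exp (-r - k / r)) (Set.Ioi 0) := by
  have h := (integrableOn_rpow_mul_exp_neg_mul (a := 1 - β) (b := 1) (by linarith)
    one_pos).const_mul (1 / k)
  refine Integrable.mono' h (by fun_prop) ?_
  filter_upwards [ae_restrict_mem measurableSet_Ioi] with r hr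
  have hr' : (0 : ℝ) < r := hr
  rw [Real.norm_of_nonneg (by positivity), show 1 - β - 1 = -β by ring, one_mul]
  exact rpow_mul_exp_le hk hr'

theorem integral_rpow_neg_mul_exp_neg {β : ℝ} (hβ : β < 1) :
    ∫ r in Set.Ioi (0 : ℝ), r ^ (-β) * Real.exp (-r) = Real.Gamma (1 - β) := by
  have h := Real.integral_rpow_mul_exp_neg_mul_Ioi (a := 1 - β) (r := 1) (by linarith) one_pos
  simpa [show 1 - β - 1 = -β by ring] using h

theorem besselInt_le {β c : ℝ} (hβ : β < 1) (hc : 0 ≤ c) (y : ℝ) :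
    besselInt β c y ≤ Real.Gamma (1 - β) := by
  rw [← integral_rpow_neg_mul_exp_neg hβ]
  have h := integrableOn_rpow_mul_exp_neg_mul (a := 1 - β) (b := 1) (by linarith) one_pos
  simp only [show 1 - β - 1 = -β by ring, one_mul] at h
  refine setIntegral_mono_on (integrableOn_besselInt_of_lt_one hβ (by positivity)) h
    measurableSet_Ioi fun r hr => ?_
  have hr' : (0 : ℝ) < r := hr
  have : 0 ≤ c * y ^ 2 / r := by positivity
  gcongr
  linarith

theorem besselInt_add_one_le {β c y : ℝ} (hβ : β < 1) (hc : 0 ≤ c) (hy : 0 < y) :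
    2 * c * y * besselInt (β + 1) c y ≤ 2 / y * Real.Gamma (1 - β) := by
  have hΓ : 0 < Real.Gamma (1 - β) := Real.Gamma_pos_of_pos (by linarith)
  rcases hc.eq_or_lt with rfl | hc
  · simp only [mul_zero, zero_mul]; positivity
  have hk : 0 < c * y ^ 2 := by positivity
  have h := integrableOn_rpow_mul_exp_neg_mul (a := 1 - β) (b := 1) (by linarith) one_pos
  simp only [show 1 - β - 1 = -β by ring, one_mul] at h
  have : besselInt (β + 1) c y ≤ 1 / (c * y ^ 2) * Real.Gamma (1 - β) := by
    rw [← integral_rpow_neg_mul_exp_neg hβ, ← integral_const_mul]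
    exact setIntegral_mono_on (integrableOn_besselInt_of_pos hβ hk) (h.const_mul _)
      measurableSet_Ioi fun r hr => rpow_mul_exp_le hk hr
  calc 2 * c * y * besselInt (β + 1) c y
      ≤ 2 * c * y * (1 / (c * y ^ 2) * Real.Gamma (1 - β)) := by gcongr
    _ = _ := by field_simp

theorem hasDerivAt_besselInt {β c y : ℝ} (hβ : β < 1) (hc : 0 ≤ c) (hy : 0 < y) :
    HasDerivAt (besselInt β c) (-(2 * c * y * besselInt (β + 1) c y)) y := by
  have hg := integrableOn_rpow_mul_exp_neg_mul (a := 1 - β) (b := 1) (by linarith) one_pos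
  simp only [show 1 - β - 1 = -β by ring, one_mul] at hg
  have key := hasDerivAt_integral_of_dominated_loc_of_deriv_le
    (μ := volume.restrict (Set.Ioi (0 : ℝ))) (s := Set.Ioi (y / 2)) (x₀ := y)
    (F := fun t r => r ^ (-β) * Real.exp (-r - c * t ^ 2 / r))
    (F' := fun t r => -(2 * c * t) * (r ^ (-(β + 1)) * Real.exp (-r - c * t ^ 2 / r)))
    (bound := fun r => 4 / y * (r ^ (-β) * Real.exp (-r)))
    (Ioi_mem_nhds (by linarith)) (Eventually.of_forall fun t => by fun_prop)
    (integrableOn_besselInt_of_lt_one hβ (by positivity)) (by fun_prop) ?_ (hg.const_mul _) ?_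
  · have h := key.2
    rw [integral_const_mul, neg_mul] at h
    exact h
  · filter_upwards [ae_restrict_mem measurableSet_Ioi] with r hr t ht
    have hr' : (0 : ℝ) < r := hr
    have ht' : y / 2 < t := ht
    have ht0 : 0 < t := by linarith
    have hct : 0 ≤ 2 * c * t := by positivity
    rw [norm_mul, norm_neg, Real.norm_of_nonneg hct, Real.norm_of_nonneg (by positivity)]
    rcases hc.eq_or_lt with rfl | hc
    · simp only [mul_zero, zero_mul]; positivity
    have hk : 0 < c * t ^ 2 := by positivity
    calc 2 * c * t * (r ^ (-(β + 1)) * Real.exp (-r - c * t ^ 2 / r))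
        ≤ 2 * c * t * (1 / (c * t ^ 2) * (r ^ (-β) * Real.exp (-r))) :=
          mul_le_mul_of_nonneg_left (rpow_mul_exp_le hk hr') hct
      _ = 2 / t * (r ^ (-β) * Real.exp (-r)) := by field_simp
      _ ≤ 4 / y * (r ^ (-β) * Real.exp (-r)) := by
          gcongr 1
          rw [div_le_div_iff₀ ht0 hy]
          linarith
  · filter_upwards [ae_restrict_mem measurableSet_Ioi] with r hr t ht
    have hr' : (0 : ℝ) < r := hr
    have h1 : HasDerivAt (fun t : ℝ => -r - c * t ^ 2 / r) (-(c * (2 * t) / r)) t := by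
      have := (((hasDerivAt_pow 2 t).const_mul c).div_const r).const_sub (-r)
      simpa using this
    refine (h1.exp.const_mul (r ^ (-β))).congr_deriv ?_
    rw [show -(β + 1) = -β - 1 by ring, Real.rpow_sub_one hr'.ne']
    ring

theorem lintegral_rpow_mul_besselInt_sq {β c : ℝ} (hβ : 0 < β) (hβ2 : β < 2) (hc : 0 < c) :
    ∫⁻ y in Set.Ioi (0 : ℝ), ENNReal.ofReal (y ^ (2 * β - 1) * besselInt β c y ^ 2) =
      ENNReal.ofReal (1 / 2 * Real.Gamma β * c ^ (-β) * Real.Gamma (2 - β)) := by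
  set K : ℝ → ℝ → ℝ → ℝ≥0∞ := fun y r q => ENNReal.ofReal
    (y ^ (2 * β - 1) * (r ^ (-β) * Real.exp (-r - c * y ^ 2 / r)) *
      (q ^ (-β) * Real.exp (-q - c * y ^ 2 / q))) with hK
  have h1 : ∀ y ∈ Set.Ioi (0 : ℝ), ENNReal.ofReal (y ^ (2 * β - 1) * besselInt β c y ^ 2) =
      ∫⁻ r in Set.Ioi (0 : ℝ), ∫⁻ q in Set.Ioi (0 : ℝ), K y r q := by
    intro y hy
    have hy' : (0 : ℝ) < y := hy
    have hi : IntegrableOn (fun r : ℝ => r ^ (-β) * Real.exp (-r - c * y ^ 2 / r)) (Set.Ioi 0) := by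
      have := integrableOn_besselInt_of_pos (β := β - 1) (k := c * y ^ 2) (by linarith)
        (by positivity)
      simpa using this
    have hnn : 0 ≤ᵐ[volume.restrict (Set.Ioi (0 : ℝ))]
        (fun r : ℝ => r ^ (-β) * Real.exp (-r - c * y ^ 2 / r)) := by
      filter_upwards [ae_restrict_mem measurableSet_Ioi] with r hr
      have : (0 : ℝ) < r := hr
      positivity
    have hB : ENNReal.ofReal (besselInt β c y) = ∫⁻ r in Set.Ioi (0 : ℝ),
        ENNReal.ofReal (r ^ (-β) * Real.exp (-r - c * y ^ 2 / r)) :=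
      ofReal_integral_eq_lintegral_ofReal hi hnn
    rw [ENNReal.ofReal_mul (by positivity), sq, ENNReal.ofReal_mul (besselInt_nonneg _ _ _)]
    nth_rw 1 [hB]
    rw [← lintegral_mul_const _ (by fun_prop), ← lintegral_const_mul _ (by fun_prop)]
    refine setLIntegral_congr_fun measurableSet_Ioi fun r hr => ?_
    have hr' : (0 : ℝ) < r := hr
    rw [hB, ← mul_assoc, ← ENNReal.ofReal_mul (by positivity), ← lintegral_const_mul _ (by fun_prop)]
    refine setLIntegral_congr_fun measurableSet_Ioi fun q hq => ?_
    simp only [hK]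
    rw [ENNReal.ofReal_mul (p := _ * _) (by positivity)]
  have hKm : Measurable (fun p : ℝ × ℝ × ℝ => K p.1 p.2.1 p.2.2) := by
    simp only [hK]; fun_prop
  have h2 : ∀ r ∈ Set.Ioi (0 : ℝ), ∀ q ∈ Set.Ioi (0 : ℝ),
      ∫⁻ y in Set.Ioi (0 : ℝ), K y r q = ENNReal.ofReal (1 / 2 * Real.Gamma β * c ^ (-β)) *
        ENNReal.ofReal ((r + q) ^ (-β) * Real.exp (-(r + q))) := by
    intro r hr q hq
    have hr' : (0 : ℝ) < r := hr
    have hq' : (0 : ℝ) < q := hq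
    have hk : 0 < c * (r + q) / (r * q) := by positivity
    have hΓ : 0 < Real.Gamma β := Real.Gamma_pos_of_pos hβ
    have e1 : ∀ y, K y r q = ENNReal.ofReal (r ^ (-β) * q ^ (-β) * Real.exp (-(r + q))) *
        ENNReal.ofReal (y ^ (2 * β - 1) * Real.exp (-(c * (r + q) / (r * q)) * y ^ 2)) := by
      intro y
      rw [← ENNReal.ofReal_mul (by positivity)]
      simp only [hK]
      congr 1
      have : Real.exp (-r - c * y ^ 2 / r) * Real.exp (-q - c * y ^ 2 / q) =
          Real.exp (-(r + q)) * Real.exp (-(c * (r + q) / (r * q)) * y ^ 2) := by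
        rw [← Real.exp_add, ← Real.exp_add]
        congr 1
        field_simp
        ring
      linear_combination y ^ (2 * β - 1) * r ^ (-β) * q ^ (-β) * this
    simp_rw [e1]
    rw [lintegral_const_mul _ (by fun_prop), lintegral_rpow_mul_exp_neg_mul_sq hβ hk,
      ← ENNReal.ofReal_mul (by positivity), ← ENNReal.ofReal_mul (by positivity)]
    congr 1
    rw [Real.div_rpow (by positivity) (by positivity), Real.mul_rpow hc.le (by positivity),
      Real.mul_rpow hr'.le hq'.le]
    field_simp
  rw [setLIntegral_congr_fun measurableSet_Ioi h1, lintegral_lintegral_swap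
    (f := fun y r => ∫⁻ q in Set.Ioi (0 : ℝ), K y r q)]
  · have h3 : ∀ r ∈ Set.Ioi (0 : ℝ), ∫⁻ y in Set.Ioi (0 : ℝ), ∫⁻ q in Set.Ioi (0 : ℝ), K y r q =
        ∫⁻ q in Set.Ioi (0 : ℝ), ENNReal.ofReal (1 / 2 * Real.Gamma β * c ^ (-β)) *
        ENNReal.ofReal ((r + q) ^ (-β) * Real.exp (-(r + q))) := by
      intro r hr
      rw [lintegral_lintegral_swap]
      · exact setLIntegral_congr_fun measurableSet_Ioi (h2 r hr)
      · exact (hKm.comp (by fun_prop : Measurable fun p : ℝ × ℝ => (p.1, r, p.2))).aemeasurable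
    have hΓ : 0 < Real.Gamma β := Real.Gamma_pos_of_pos hβ
    rw [setLIntegral_congr_fun measurableSet_Ioi h3,
      lintegral_lintegral_comp_add (F := fun v => ENNReal.ofReal (1 / 2 * Real.Gamma β * c ^ (-β)) *
        ENNReal.ofReal (v ^ (-β) * Real.exp (-v))) (by fun_prop),
      ENNReal.ofReal_mul (p := 1 / 2 * Real.Gamma β * c ^ (-β)) (by positivity)]
    have h4 := lintegral_rpow_mul_exp_neg_mul (a := 2 - β) (b := 1) (by linarith) one_pos
    rw [div_one, Real.one_rpow, one_mul] at h4
    rw [← h4, ← lintegral_const_mul _ (by fun_prop)]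
    refine setLIntegral_congr_fun measurableSet_Ioi fun v hv => ?_
    have hv' : (0 : ℝ) < v := hv
    rw [mul_left_comm, ← ENNReal.ofReal_mul hv'.le]
    congr 2
    rw [show 2 - β - 1 = -β + 1 by ring, Real.rpow_add_one hv'.ne', one_mul]
    ring
  · refine Measurable.aemeasurable ?_
    exact Measurable.lintegral_prod_right'
      (f := fun p : (ℝ × ℝ) × ℝ => K p.1.1 p.1.2 p.2) 
      (hKm.comp (by fun_prop : Measurable fun p : (ℝ × ℝ) × ℝ => (p.1.1, p.1.2, p.2)))

end BesselIntegral

section PoissonKernel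

open scoped FourierTransform

variable {E : Type*} [NormedAddCommGroup E] [InnerProductSpace ℝ E] [FiniteDimensional ℝ E]
  [MeasurableSpace E] [BorelSpace E]

theorem integrable_rexp_neg_mul_sq_norm {b : ℝ} (hb : 0 < b) :
    Integrable (fun v : E => Real.exp (-b * ‖v‖ ^ 2)) := by
  have h := (GaussianFourier.integrable_cexp_neg_mul_sq_norm_add (V := E) (b := (b : ℂ))
    (by simpa using hb) 0 0).norm
  refine h.congr (Eventually.of_forall fun v => ?_)
  simp [Complex.norm_exp, ← Complex.ofReal_pow]

/-- The Gaussian superposition defining `besselInt` is absolutely convergent. -/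
theorem integrable_prod_besselInt {s y : ℝ} (hs : 0 < s) (hy : 0 < y) :
    Integrable (fun p : E × ℝ => p.2 ^ (-(1 - s)) *
      Real.exp (-p.2 - π ^ 2 * ‖p.1‖ ^ 2 * y ^ 2 / p.2))
      ((volume : Measure E).prod (volume.restrict (Set.Ioi (0 : ℝ)))) := by
  set d : ℝ := Module.finrank ℝ E / 2 with hd
  have hd0 : 0 ≤ d := by positivity
  have hsplit : ∀ (x : E) (r : ℝ), r ^ (-(1 - s)) *
      Real.exp (-r - π ^ 2 * ‖x‖ ^ 2 * y ^ 2 / r) =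
      r ^ (-(1 - s)) * Real.exp (-r) * Real.exp (-(π ^ 2 * y ^ 2 / r) * ‖x‖ ^ 2) := by
    intro x r
    rw [mul_assoc (r ^ _), ← Real.exp_add]
    congr 2
    ring
  rw [integrable_prod_iff' (by fun_prop)]
  constructor
  · filter_upwards [ae_restrict_mem measurableSet_Ioi] with r hr
    have hr' : (0 : ℝ) < r := hr
    simp only [hsplit]
    exact (integrable_rexp_neg_mul_sq_norm (by positivity)).const_mul _
  · have h := (integrableOn_rpow_mul_exp_neg_mul (a := s + d) (b := 1) (by positivity)
      one_pos).const_mul ((π * y ^ 2) ^ (-d))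
    refine h.congr ?_
    filter_upwards [ae_restrict_mem measurableSet_Ioi] with r hr
    have hr' : (0 : ℝ) < r := hr
    have hnn : ∀ x : E, ‖r ^ (-(1 - s)) * Real.exp (-r - π ^ 2 * ‖x‖ ^ 2 * y ^ 2 / r)‖ =
        r ^ (-(1 - s)) * Real.exp (-r) * Real.exp (-(π ^ 2 * y ^ 2 / r) * ‖x‖ ^ 2) := by
      intro x
      rw [Real.norm_of_nonneg (by positivity), hsplit]
    simp only [hnn]
    rw [integral_const_mul, GaussianFourier.integral_rexp_neg_mul_sq_norm (by positivity), ← hd,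
      show π / (π ^ 2 * y ^ 2 / r) = (π * y ^ 2)⁻¹ * r by field_simp,
      Real.mul_rpow (by positivity) hr'.le, Real.inv_rpow (by positivity),
      ← Real.rpow_neg (by positivity), show s + d - 1 = -(1 - s) + d by ring,
      Real.rpow_add hr', one_mul]
    ring

theorem integrable_besselInt {s y : ℝ} (hs : 0 < s) (hy : 0 < y) :
    Integrable (fun ξ : E => besselInt (1 - s) (π ^ 2 * ‖ξ‖ ^ 2) y) :=
  (integrable_prod_besselInt hs hy).integral_prod_left

/-- The Fourier transform of the Bessel multiplier is the (unnormalized) Poisson kernel. -/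
theorem fourier_besselInt {s y : ℝ} (hs : 0 < s) (hy : 0 < y) (z : E) :
    𝓕 (fun ξ : E => ((besselInt (1 - s) (π ^ 2 * ‖ξ‖ ^ 2) y : ℝ) : ℂ)) z =
      ((π ^ (-(Module.finrank ℝ E / 2 : ℝ)) * Real.Gamma (s + Module.finrank ℝ E / 2) *
        (y ^ (2 * s) * (‖z‖ ^ 2 + y ^ 2) ^ (-(s + Module.finrank ℝ E / 2 : ℝ))) : ℝ) : ℂ) := by
  set d : ℝ := Module.finrank ℝ E / 2 with hd
  have hd0 : 0 ≤ d := by positivity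
  set f : E → ℝ → ℝ := fun x r =>
    r ^ (-(1 - s)) * Real.exp (-r - π ^ 2 * ‖x‖ ^ 2 * y ^ 2 / r) with hf
  have hprod : Integrable (fun p : E × ℝ => ((f p.1 p.2 : ℝ) : ℂ))
      ((volume : Measure E).prod (volume.restrict (Set.Ioi (0 : ℝ)))) :=
    (integrable_prod_besselInt hs hy).ofReal
  have hprod' : Integrable (fun p : E × ℝ => Complex.exp ((↑(-2 * π * ⟪p.1, z⟫) * Complex.I)) *
      ((f p.1 p.2 : ℝ) : ℂ)) ((volume : Measure E).prod (volume.restrict (Set.Ioi (0 : ℝ)))) := by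
    refine hprod.bdd_mul (c := 1) (by fun_prop) (Eventually.of_forall fun p => ?_)
    rw [Complex.norm_exp_ofReal_mul_I]
  have h1 : ∀ r ∈ Set.Ioi (0 : ℝ), ∫ x : E, Complex.exp ((↑(-2 * π * ⟪x, z⟫) * Complex.I)) *
      ((f x r : ℝ) : ℂ) = (((π * y ^ 2) ^ (-d) * (r ^ (s + d - 1) *
        Real.exp (-((1 + ‖z‖ ^ 2 / y ^ 2) * r))) : ℝ) : ℂ) := by
    intro r hr
    have hr' : (0 : ℝ) < r := hr
    have hb : 0 < π ^ 2 * y ^ 2 / r := by positivity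
    have hg := fourier_gaussian_innerProductSpace (V := E) (b := ((π ^ 2 * y ^ 2 / r : ℝ) : ℂ))
      (by rw [Complex.ofReal_re]; exact hb) z
    rw [Real.fourier_eq'] at hg
    have e1 : ∀ x : E, Complex.exp ((↑(-2 * π * ⟪x, z⟫) * Complex.I)) * ((f x r : ℝ) : ℂ) =
        ((r ^ (-(1 - s)) * Real.exp (-r) : ℝ) : ℂ) *
        (Complex.exp ((↑(-2 * π * ⟪x, z⟫) * Complex.I)) •
          Complex.exp (-((π ^ 2 * y ^ 2 / r : ℝ) : ℂ) * ‖x‖ ^ 2)) := by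
      intro x
      have : f x r = r ^ (-(1 - s)) * Real.exp (-r) *
          Real.exp (-(π ^ 2 * y ^ 2 / r) * ‖x‖ ^ 2) := by
        simp only [hf]
        rw [mul_assoc (r ^ _), ← Real.exp_add]
        congr 2
        ring
      rw [this, smul_eq_mul]
      push_cast
      ring
    simp_rw [e1]
    rw [integral_const_mul, hg]
    have e2 : ((π : ℂ) / ((π ^ 2 * y ^ 2 / r : ℝ) : ℂ)) ^ ((Module.finrank ℝ E : ℂ) / 2) =
        (((π * y ^ 2) ^ (-d) * r ^ d : ℝ) : ℂ) := by
      rw [← Complex.ofReal_div, show (Module.finrank ℝ E : ℂ) / 2 = ((d : ℝ) : ℂ) by simp [hd],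
        ← Complex.ofReal_cpow (by positivity),
        show π / (π ^ 2 * y ^ 2 / r) = (π * y ^ 2)⁻¹ * r by field_simp,
        Real.mul_rpow (by positivity) hr'.le, Real.inv_rpow (by positivity),
        ← Real.rpow_neg (by positivity)]
    have e3 : Complex.exp (-(π : ℂ) ^ 2 * ‖z‖ ^ 2 / ((π ^ 2 * y ^ 2 / r : ℝ) : ℂ)) =
        ((Real.exp (-(‖z‖ ^ 2 / y ^ 2 * r)) : ℝ) : ℂ) := by
      rw [Complex.ofReal_exp]
      congr 1
      rw [show -(‖z‖ ^ 2 / y ^ 2 * r) = -π ^ 2 * ‖z‖ ^ 2 / (π ^ 2 * y ^ 2 / r) by field_simp]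
      push_cast
      ring
    rw [e2, e3, ← Complex.ofReal_mul, ← Complex.ofReal_mul]
    congr 1
    rw [show -((1 + ‖z‖ ^ 2 / y ^ 2) * r) = -r + -(‖z‖ ^ 2 / y ^ 2 * r) by ring, Real.exp_add,
      show s + d - 1 = -(1 - s) + d by ring, Real.rpow_add hr']
    ring
  have h2 : 𝓕 (fun ξ : E => ((besselInt (1 - s) (π ^ 2 * ‖ξ‖ ^ 2) y : ℝ) : ℂ)) z =
      ∫ x : E, ∫ r in Set.Ioi (0 : ℝ), Complex.exp ((↑(-2 * π * ⟪x, z⟫) * Complex.I)) *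
      ((f x r : ℝ) : ℂ) := by
    rw [Real.fourier_eq']
    congr 1 with x
    rw [integral_const_mul, integral_complex_ofReal, smul_eq_mul]
    rfl
  have hk : 0 < 1 + ‖z‖ ^ 2 / y ^ 2 := by positivity
  rw [h2, integral_integral_swap hprod', setIntegral_congr_fun measurableSet_Ioi h1,
    integral_complex_ofReal, integral_const_mul,
    Real.integral_rpow_mul_exp_neg_mul_Ioi (by positivity) hk]
  congr 1
  rw [show 1 / (1 + ‖z‖ ^ 2 / y ^ 2) = y ^ 2 * (‖z‖ ^ 2 + y ^ 2)⁻¹ by field_simp; ring,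
    Real.mul_rpow (by positivity) (by positivity), Real.mul_rpow (by positivity) (by positivity),
    Real.inv_rpow (by positivity), ← Real.rpow_neg (by positivity)]
  have : (y ^ 2) ^ (-d) * (y ^ 2) ^ (s + d) = y ^ (2 * s) := by
    rw [← Real.rpow_add (by positivity), ← Real.rpow_natCast, ← Real.rpow_mul hy.le]
    congr 1
    push_cast
    ring
  rw [← this]
  ring

/-- The normalizing constant of the Poisson kernel. -/
theorem integral_poissonKernel {s : ℝ} (hs : 0 < s) :
    ∫ z : E, (‖z‖ ^ 2 + 1) ^ (-(s + Module.finrank ℝ E / 2 : ℝ)) =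
      π ^ (Module.finrank ℝ E / 2 : ℝ) * Real.Gamma s /
        Real.Gamma (s + Module.finrank ℝ E / 2) := by
  set d : ℝ := Module.finrank ℝ E / 2 with hd
  have hd0 : 0 ≤ d := by positivity
  have hΓ : 0 < Real.Gamma (s + d) := Real.Gamma_pos_of_pos (by positivity)
  have hΓs : 0 < Real.Gamma s := Real.Gamma_pos_of_pos hs
  have h1 : ∀ z : E, ENNReal.ofReal ((‖z‖ ^ 2 + 1) ^ (-(s + d)) * Real.Gamma (s + d)) =
      ∫⁻ r in Set.Ioi (0 : ℝ), ENNReal.ofReal (r ^ (s + d - 1) *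
        Real.exp (-((‖z‖ ^ 2 + 1) * r))) := by
    intro z
    rw [lintegral_rpow_mul_exp_neg_mul (by positivity) (by positivity), one_div,
      Real.inv_rpow (by positivity), ← Real.rpow_neg (by positivity)]
  have h2 : ∀ r ∈ Set.Ioi (0 : ℝ), ∫⁻ z : E, ENNReal.ofReal (r ^ (s + d - 1) *
        Real.exp (-((‖z‖ ^ 2 + 1) * r))) =
      ENNReal.ofReal (π ^ d) * ENNReal.ofReal (r ^ (s - 1) * Real.exp (-(1 * r))) := by
    intro r hr
    have hr' : (0 : ℝ) < r := hr
    have e : ∀ z : E, ENNReal.ofReal (r ^ (s + d - 1) * Real.exp (-((‖z‖ ^ 2 + 1) * r))) =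
        ENNReal.ofReal (r ^ (s + d - 1) * Real.exp (-r)) *
          ENNReal.ofReal (Real.exp (-r * ‖z‖ ^ 2)) := by
      intro z
      rw [← ENNReal.ofReal_mul (by positivity), mul_assoc, ← Real.exp_add]
      congr 3
      ring
    simp_rw [e]
    rw [lintegral_const_mul _ (by fun_prop), ← ofReal_integral_eq_lintegral_ofReal
      (integrable_rexp_neg_mul_sq_norm hr') (Eventually.of_forall fun _ => by positivity),
      GaussianFourier.integral_rexp_neg_mul_sq_norm hr', ← hd,
      ← ENNReal.ofReal_mul (by positivity), ← ENNReal.ofReal_mul (by positivity)]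
    congr 1
    rw [Real.div_rpow (by positivity) hr'.le, show s + d - 1 = s - 1 + d by ring,
      Real.rpow_add hr', one_mul]
    field_simp
  have h3 : ∫⁻ z : E, ENNReal.ofReal ((‖z‖ ^ 2 + 1) ^ (-(s + d)) * Real.Gamma (s + d)) =
      ENNReal.ofReal (π ^ d * Real.Gamma s) := by
    simp_rw [h1]
    rw [lintegral_lintegral_swap (Measurable.aemeasurable (by fun_prop)),
      setLIntegral_congr_fun measurableSet_Ioi h2, lintegral_const_mul _ (by fun_prop),
      lintegral_rpow_mul_exp_neg_mul hs one_pos, ← ENNReal.ofReal_mul (by positivity), div_one,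
      Real.one_rpow, one_mul]
  have h4 : ∫ z : E, (‖z‖ ^ 2 + 1) ^ (-(s + d)) * Real.Gamma (s + d) = π ^ d * Real.Gamma s := by
    rw [integral_eq_lintegral_of_nonneg_ae (Eventually.of_forall fun z => by positivity)
      (Measurable.aestronglyMeasurable (by fun_prop)), h3, ENNReal.toReal_ofReal (by positivity)]
  rw [eq_div_iff hΓ.ne', ← integral_mul_const, h4]

/-- Convolution with a Fourier transform, written as a Fourier multiplier. -/
theorem integral_mul_fourier_sub {u ψ : E → ℂ} (hu : Integrable u) (hψ : Integrable ψ) (x : E) :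
    ∫ v, u v * 𝓕 ψ (x - v) = 𝓕 (fun ξ => ψ ξ * 𝓕⁻ u ξ) x := by
  set g : E → ℂ := fun ξ => Complex.exp ((↑(-2 * π * ⟪ξ, x⟫) * Complex.I)) * ψ ξ with hg
  have hgi : Integrable g := by
    refine hψ.bdd_mul (c := 1) (by fun_prop) (Eventually.of_forall fun p => ?_)
    rw [Complex.norm_exp_ofReal_mul_I]
  have h := integral_fourier_mul_eq (f := fun v => u (-v)) hu.comp_neg hgi
  have hgF : ∀ v, 𝓕 g (-v) = 𝓕 ψ (x - v) := by
    intro v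
    rw [Real.fourier_eq', Real.fourier_eq']
    congr 1 with ξ
    simp only [hg, smul_eq_mul]
    rw [← mul_assoc, ← Complex.exp_add, inner_neg_right, inner_sub_right]
    congr 2
    push_cast
    ring
  calc ∫ v, u v * 𝓕 ψ (x - v) = ∫ v, u v * 𝓕 g (-v) := by simp_rw [hgF]
    _ = ∫ v, u (-v) * 𝓕 g v := by
      rw [← integral_neg_eq_self]
      simp
    _ = ∫ ξ, 𝓕 (fun v => u (-v)) ξ * g ξ := h.symm
    _ = _ := by
      rw [Real.fourier_eq', ← Real.fourierInv_eq_fourier_comp_neg]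
      congr 1 with ξ
      simp only [hg, smul_eq_mul]
      ring

end PoissonKernel

section Gradient

open scoped FourierTransform SchwartzMap

variable {E : Type*} [NormedAddCommGroup E] [InnerProductSpace ℝ E] [FiniteDimensional ℝ E]

theorem norm_sq_eq_sum_sq_apply_orthonormalBasis {ι : Type*} [Fintype ι]
    (b : OrthonormalBasis ι ℝ E) (L : E →L[ℝ] ℝ) : ‖L‖ ^ 2 = ∑ i, L (b i) ^ 2 := by
  have h := b.sum_sq_norm_inner_left ((InnerProductSpace.toDual ℝ E).symm L)
  rw [LinearIsometryEquiv.norm_map] at h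
  rw [← h]
  refine Finset.sum_congr rfl fun i _ => ?_
  rw [InnerProductSpace.toDual_symm_apply, Real.norm_eq_abs, sq_abs]

variable [MeasurableSpace E] [BorelSpace E]

/-- The directional derivative of a real function that is the Fourier integral of `h`. -/
theorem fderiv_apply_of_eq_fourier {f : E → ℝ} {h : E → ℂ} (hf : ∀ x, (f x : ℂ) = 𝓕 h x)
    (h1 : Integrable h) (h2 : Integrable (fun ξ => ‖ξ‖ * ‖h ξ‖)) (x e : E) :
    ((fderiv ℝ f x e : ℝ) : ℂ) =
      𝓕 (fun ξ => -(2 * π * Complex.I) * ((⟪ξ, e⟫ : ℝ) * h ξ)) x := by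
  have hD := Real.hasFDerivAt_fourier h1 h2 x
  have hre : HasFDerivAt f (Complex.reCLM.comp
      (𝓕 (VectorFourier.fourierSMulRight (innerSL ℝ) h) x)) x := by
    have := Complex.reCLM.hasFDerivAt.comp x hD
    refine this.congr_of_eventuallyEq (Eventually.of_forall fun z => ?_)
    simp [← hf]
  have hof : HasFDerivAt (𝓕 h) (Complex.ofRealCLM.comp (fderiv ℝ f x)) x := by
    have := Complex.ofRealCLM.hasFDerivAt.comp x hre.differentiableAt.hasFDerivAt
    refine this.congr_of_eventuallyEq (Eventually.of_forall fun z => ?_)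
    simp [← hf]
  have heq := congrArg (fun L => L e) (hof.unique hD)
  simp only [ContinuousLinearMap.comp_apply, Complex.ofRealCLM_apply] at heq
  have hintg : Integrable (VectorFourier.fourierSMulRight (innerSL ℝ) h) := by
    refine (h2.const_mul (2 * π * ‖(innerSL ℝ : E →L[ℝ] E →L[ℝ] ℝ)‖)).mono'
      h1.aestronglyMeasurable.fourierSMulRight (Eventually.of_forall fun ξ => ?_)
    refine (VectorFourier.norm_fourierSMulRight_le _ _ _).trans_eq ?_
    ring
  rw [heq, Real.fourier_continuousLinearMap_apply hintg]
  congr 1 with ξ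

/-- Plancherel identity for the gradient. -/
theorem integral_norm_fderiv_sq_of_eq_fourier {f : E → ℝ} {h : E → ℂ}
    (hf : ∀ x, (f x : ℂ) = 𝓕 h x) (h1 : Integrable h) (h2 : Integrable (fun ξ => ‖ξ‖ * ‖h ξ‖))
    (h3 : MemLp (fun ξ => ‖ξ‖ * ‖h ξ‖) 2) :
    Integrable (fun x => ‖fderiv ℝ f x‖ ^ 2) ∧
      ∫ x, ‖fderiv ℝ f x‖ ^ 2 = ∫ ξ, 4 * π ^ 2 * ‖ξ‖ ^ 2 * ‖h ξ‖ ^ 2 := by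
  set b := stdOrthonormalBasis ℝ E
  set g : Fin (Module.finrank ℝ E) → E → ℂ :=
    fun i ξ => -(2 * π * Complex.I) * ((⟪ξ, b i⟫ : ℝ) * h ξ) with hg
  have hgm : ∀ i, AEStronglyMeasurable (g i) := fun i => by
    have := h1.aestronglyMeasurable
    fun_prop
  have hgn : ∀ i ξ, ‖g i ξ‖ = 2 * π * (|⟪ξ, b i⟫| * ‖h ξ‖) := fun i ξ => by
    simp [hg, abs_of_pos Real.pi_pos]
  have hgle : ∀ i ξ, ‖g i ξ‖ ≤ 2 * π * (‖ξ‖ * ‖h ξ‖) := fun i ξ => by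
    rw [hgn]
    have : |⟪ξ, b i⟫| ≤ ‖ξ‖ := by
      simpa using abs_real_inner_le_norm ξ (b i)
    gcongr
  have hg1 : ∀ i, Integrable (g i) := fun i =>
    (h2.const_mul (2 * π)).mono' (hgm i) (Eventually.of_forall (hgle i))
  have hg2 : ∀ i, MemLp (g i) 2 := fun i =>
    (h3.const_mul (2 * π)).mono (hgm i) (Eventually.of_forall fun ξ =>
      (hgle i ξ).trans (Real.le_norm_self _))
  have hP := fun i => memLp_fourier_and_integral_norm_sq (hg1 i) (hg2 i)
  have hpt : ∀ x, ‖fderiv ℝ f x‖ ^ 2 = ∑ i, ‖𝓕 (g i) x‖ ^ 2 := fun x => by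
    rw [norm_sq_eq_sum_sq_apply_orthonormalBasis b]
    refine Finset.sum_congr rfl fun i _ => ?_
    rw [← fderiv_apply_of_eq_fourier hf h1 h2 x (b i), Complex.norm_real, Real.norm_eq_abs, sq_abs]
  have hintg : ∀ i, Integrable (fun x => ‖𝓕 (g i) x‖ ^ 2) := fun i => (hP i).1.integrable_norm_pow
    two_ne_zero
  simp_rw [hpt]
  refine ⟨integrable_finsetSum _ fun i _ => hintg i, ?_⟩
  rw [integral_finsetSum _ fun i _ => hintg i]
  simp_rw [fun i => (hP i).2]
  rw [← integral_finsetSum _ fun i _ => (hg2 i).integrable_norm_pow two_ne_zero]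
  congr 1 with ξ
  rw [← b.sum_sq_norm_inner_left ξ]
  simp_rw [hgn, Finset.mul_sum, Finset.sum_mul, Real.norm_eq_abs]
  refine Finset.sum_congr rfl fun i _ => ?_
  ring

/-- Differentiation of a Fourier integral with respect to a parameter of the multiplier. -/
theorem hasDerivAt_fourier_mul {m m' : E → ℝ → ℝ} {v : E → ℂ} {y C : ℝ} (hy : 0 < y)
    (hv : Integrable v) (hm : ∀ t, Measurable fun ξ => m ξ t)
    (hm' : Measurable fun ξ => m' ξ y)
    (hmi : Integrable (fun ξ => (m ξ y : ℂ) * v ξ))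
    (hbd : ∀ ξ t, 0 < t → |m' ξ t| ≤ C / t)
    (hd : ∀ ξ t, 0 < t → HasDerivAt (m ξ) (m' ξ t) t) (x : E) :
    HasDerivAt (fun t => 𝓕 (fun ξ => (m ξ t : ℂ) * v ξ) x)
      (𝓕 (fun ξ => (m' ξ y : ℂ) * v ξ) x) y := by
  simp_rw [Real.fourier_eq', smul_eq_mul]
  have hvm := hv.aestronglyMeasurable
  have hC : 0 ≤ C := by
    have := (abs_nonneg _).trans (hbd 0 1 one_pos)
    simpa using this
  have hofm : ∀ t, AEStronglyMeasurable (fun ξ => (m ξ t : ℂ)) (volume : Measure E) := fun t =>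
    (Complex.measurable_ofReal.comp (hm t)).aestronglyMeasurable
  have hofm' : AEStronglyMeasurable (fun ξ => (m' ξ y : ℂ)) (volume : Measure E) :=
    (Complex.measurable_ofReal.comp hm').aestronglyMeasurable
  refine (hasDerivAt_integral_of_dominated_loc_of_deriv_le (s := Set.Ioi (y / 2))
    (bound := fun ξ => C / (y / 2) * ‖v ξ‖) (Ioi_mem_nhds (by linarith))
    (F := fun t ξ => Complex.exp ((↑(-2 * π * ⟪ξ, x⟫) * Complex.I)) * ((m ξ t : ℂ) * v ξ))
    (F' := fun t ξ => Complex.exp ((↑(-2 * π * ⟪ξ, x⟫) * Complex.I)) * ((m' ξ t : ℂ) * v ξ))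
    (Eventually.of_forall fun t => ?_) ?_ ?_ ?_ (hv.norm.const_mul _) ?_).2
  · exact AEStronglyMeasurable.mul (by fun_prop) ((hofm t).mul hvm)
  · refine hmi.bdd_mul (c := 1) (by fun_prop) (Eventually.of_forall fun p => ?_)
    rw [Complex.norm_exp_ofReal_mul_I]
  · exact AEStronglyMeasurable.mul (by fun_prop) (hofm'.mul hvm)
  · refine Eventually.of_forall fun ξ t ht => ?_
    have ht' : y / 2 < t := ht
    rw [norm_mul, Complex.norm_exp_ofReal_mul_I, one_mul, norm_mul, Complex.norm_real]
    refine mul_le_mul_of_nonneg_right ((hbd ξ t (by linarith)).trans ?_) (norm_nonneg _)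
    gcongr
  · refine Eventually.of_forall fun ξ t ht => ?_
    have ht' : y / 2 < t := ht
    exact (((hd ξ t (by linarith)).ofReal_comp).mul_const (v ξ)).const_mul _

end Gradient

section Energy

open scoped FourierTransform SchwartzMap

/-- The weighted energy of a single Fourier mode of the extension. -/
theorem lintegral_besselInt_energy {s c : ℝ} (hs0 : 0 < s) (hs1 : s < 1) (hc : 0 ≤ c) :
    ∫⁻ y in Set.Ioi (0 : ℝ), ENNReal.ofReal (y ^ (1 - 2 * s) *
      (4 * c * besselInt (1 - s) c y ^ 2 + (2 * c * y * besselInt (1 - s + 1) c y) ^ 2)) =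
      ENNReal.ofReal (2 * Real.Gamma (1 - s) * Real.Gamma s * c ^ s) := by
  rcases hc.eq_or_lt with rfl | hc
  · simp [Real.zero_rpow hs0.ne']
  have hm : ∀ β, Measurable (besselInt β c) := fun β =>
    (measurable_besselInt β).comp (measurable_const.prodMk measurable_id)
  have hm1 := hm (1 - s)
  have hsplit : ∀ y ∈ Set.Ioi (0 : ℝ), ENNReal.ofReal (y ^ (1 - 2 * s) *
      (4 * c * besselInt (1 - s) c y ^ 2 + (2 * c * y * besselInt (1 - s + 1) c y) ^ 2)) =
      ENNReal.ofReal (4 * c) * ENNReal.ofReal (y ^ (2 * (1 - s) - 1) * besselInt (1 - s) c y ^ 2) +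
      ENNReal.ofReal (4 * c ^ 2) *
        ENNReal.ofReal (y ^ (2 * (1 - s + 1) - 1) * besselInt (1 - s + 1) c y ^ 2) := by
    intro y hy
    have hy' : (0 : ℝ) < y := hy
    rw [← ENNReal.ofReal_mul (by positivity), ← ENNReal.ofReal_mul (by positivity),
      ← ENNReal.ofReal_add (by positivity) (by positivity)]
    congr 1
    rw [show 2 * (1 - s + 1) - 1 = (1 - 2 * s) + 2 by ring, Real.rpow_add hy', Real.rpow_two,
      show 2 * (1 - s) - 1 = 1 - 2 * s by ring]
    ring
  have hG : 0 < Real.Gamma (1 - s) := Real.Gamma_pos_of_pos (by linarith)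
  have hG2 : 0 < Real.Gamma s := Real.Gamma_pos_of_pos hs0
  have h1 := Real.Gamma_add_one (s := 1 - s) (by linarith)
  have h2 := Real.Gamma_add_one (s := s) hs0.ne'
  have e1 : c ^ (-(1 - s)) = c ^ s / c := by
    rw [show -(1 - s) = s - 1 by ring, Real.rpow_sub_one hc.ne']
  have e2 : c ^ (-(1 - s + 1)) = c ^ s / c ^ 2 := by
    rw [show -(1 - s + 1) = s - 2 by ring, Real.rpow_sub hc, Real.rpow_two]
  have h1s : 0 < 1 - s := by linarith
  have hcs : 0 < c ^ s := by positivity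
  rw [setLIntegral_congr_fun measurableSet_Ioi hsplit, lintegral_add_left (by fun_prop),
    lintegral_const_mul' _ _ (by finiteness), lintegral_const_mul' _ _ (by finiteness),
    lintegral_rpow_mul_besselInt_sq (by linarith) (by linarith) hc,
    lintegral_rpow_mul_besselInt_sq (by linarith) (by linarith) hc,
    show 2 - (1 - s) = s + 1 by ring, show 2 - (1 - s + 1) = s by ring, h1, h2, e1, e2,
    ← ENNReal.ofReal_mul (by positivity), ← ENNReal.ofReal_mul (by positivity),
    ← ENNReal.ofReal_add (by positivity) (by positivity)]
  congr 1
  field_simp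
  ring

variable {E : Type*} [NormedAddCommGroup E]

/-- The Fourier multiplier of the normalized Caffarelli–Silvestre extension. -/
noncomputable def extMult (s : ℝ) (ξ : E) (y : ℝ) : ℝ :=
  besselInt (1 - s) (π ^ 2 * ‖ξ‖ ^ 2) y / Real.Gamma s

/-- The derivative of `extMult` in the extension variable. -/
noncomputable def extMultDeriv (s : ℝ) (ξ : E) (y : ℝ) : ℝ :=
  -(2 * (π ^ 2 * ‖ξ‖ ^ 2) * y * besselInt (1 - s + 1) (π ^ 2 * ‖ξ‖ ^ 2) y) / Real.Gamma s

theorem abs_extMult_le {s : ℝ} (hs : 0 < s) (ξ : E) (y : ℝ) : |extMult s ξ y| ≤ 1 := by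
  have hG := Real.Gamma_pos_of_pos hs
  have h := besselInt_le (β := 1 - s) (c := π ^ 2 * ‖ξ‖ ^ 2) (by linarith) (by positivity) y
  rw [sub_sub_cancel] at h
  rw [extMult, abs_of_nonneg (div_nonneg (besselInt_nonneg _ _ _) hG.le), div_le_one hG]
  exact h

theorem abs_extMultDeriv_le {s : ℝ} (hs : 0 < s) (ξ : E) {y : ℝ} (hy : 0 < y) :
    |extMultDeriv s ξ y| ≤ 2 / y := by
  have hG := Real.Gamma_pos_of_pos hs
  have h := besselInt_add_one_le (β := 1 - s) (c := π ^ 2 * ‖ξ‖ ^ 2) (by linarith)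
    (by positivity) hy
  have h0 := besselInt_nonneg (1 - s + 1) (π ^ 2 * ‖ξ‖ ^ 2) y
  rw [sub_sub_cancel] at h
  rw [extMultDeriv, abs_div, abs_neg, abs_of_nonneg (by positivity), abs_of_pos hG, div_le_iff₀ hG]
  exact h

theorem hasDerivAt_extMult {s : ℝ} (hs : 0 < s) (ξ : E) {y : ℝ} (hy : 0 < y) :
    HasDerivAt (extMult s ξ) (extMultDeriv s ξ y) y :=
  (hasDerivAt_besselInt (by linarith) (by positivity) hy).div_const _

variable [MeasurableSpace E] [BorelSpace E]

theorem measurable_extMult (s : ℝ) : Measurable (fun p : E × ℝ => extMult s p.1 p.2) := by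
  have hg : Measurable (fun p : E × ℝ => (π ^ 2 * ‖p.1‖ ^ 2, p.2)) := by fun_prop
  exact ((measurable_besselInt (1 - s)).comp hg).div_const _

theorem measurable_extMultDeriv (s : ℝ) :
    Measurable (fun p : E × ℝ => extMultDeriv s p.1 p.2) := by
  have hg : Measurable (fun p : E × ℝ => (π ^ 2 * ‖p.1‖ ^ 2, p.2)) := by fun_prop
  have h := (measurable_besselInt (1 - s + 1)).comp hg
  exact ((Measurable.mul (by fun_prop) h).neg).div_const _

variable [InnerProductSpace ℝ E] [FiniteDimensional ℝ E]

/-- The extension is the Fourier multiplier operator with symbol `extMult`. -/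
theorem extension_eq_fourier {s y : ℝ} (hs : 0 < s) (hy : 0 < y) {u : E → ℝ} (hu : Integrable u)
    (x : E) :
    (((1 / ∫ z : E, (‖z‖ ^ 2 + 1) ^ (-(s + Module.finrank ℝ E / 2 : ℝ))) *
      ∫ ξ : E, y ^ (2 * s) * u ξ *
        (‖x - ξ‖ ^ 2 + y ^ 2) ^ (-(s + Module.finrank ℝ E / 2 : ℝ)) : ℝ) : ℂ) =
      𝓕 (fun ξ => (extMult s ξ y : ℂ) * 𝓕⁻ (fun z => (u z : ℂ)) ξ) x := by
  have hG := Real.Gamma_pos_of_pos hs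
  have hGd : 0 < Real.Gamma (s + Module.finrank ℝ E / 2) := Real.Gamma_pos_of_pos (by positivity)
  have hψ : Integrable (fun ξ : E => (extMult s ξ y : ℂ)) :=
    ((integrable_besselInt hs hy).div_const _).ofReal
  have hU : Integrable (fun z => (u z : ℂ)) := hu.ofReal
  rw [← integral_mul_fourier_sub hU hψ, integral_poissonKernel hs, ← integral_const_mul,
    ← integral_complex_ofReal]
  congr 1 with v
  have hF : 𝓕 (fun ξ : E => (extMult s ξ y : ℂ)) (x - v) = ((Real.Gamma s)⁻¹ : ℝ) *
      𝓕 (fun ξ : E => ((besselInt (1 - s) (π ^ 2 * ‖ξ‖ ^ 2) y : ℝ) : ℂ)) (x - v) := by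
    rw [Real.fourier_eq', Real.fourier_eq', ← integral_const_mul]
    congr 1 with ξ
    simp only [extMult, smul_eq_mul]
    push_cast
    ring
  rw [hF, fourier_besselInt hs hy, ← Complex.ofReal_mul, ← Complex.ofReal_mul]
  congr 1
  rw [Real.rpow_neg Real.pi_pos.le]
  field_simp

end Energy

section EnergyIdentity

open scoped FourierTransform SchwartzMap

variable {E : Type*} [NormedAddCommGroup E]

/-- The Dirichlet energy density of the extension on the Fourier side. -/
noncomputable def extEnergyDensity (s : ℝ) (v : E → ℂ) (ξ : E) (y : ℝ) : ℝ :=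
  y ^ (1 - 2 * s) * (4 * π ^ 2 * ‖ξ‖ ^ 2 * extMult s ξ y ^ 2 + extMultDeriv s ξ y ^ 2) * ‖v ξ‖ ^ 2

/-- The energy density integrated over the extension variable. -/
theorem lintegral_extEnergyDensity {s : ℝ} (hs0 : 0 < s) (hs1 : s < 1) (v : E → ℂ) (ξ : E) :
    ∫⁻ y in Set.Ioi (0 : ℝ), ENNReal.ofReal (extEnergyDensity s v ξ y) =
      ENNReal.ofReal (2 * Real.Gamma (1 - s) / Real.Gamma s *
        ((π ^ 2 * ‖ξ‖ ^ 2) ^ s * ‖v ξ‖ ^ 2)) := by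
  have hG := Real.Gamma_pos_of_pos hs0
  have hG1 : 0 < Real.Gamma (1 - s) := Real.Gamma_pos_of_pos (by linarith)
  have e : ∀ y, ENNReal.ofReal (extEnergyDensity s v ξ y) =
      ENNReal.ofReal (‖v ξ‖ ^ 2 / Real.Gamma s ^ 2) * ENNReal.ofReal (y ^ (1 - 2 * s) *
      (4 * (π ^ 2 * ‖ξ‖ ^ 2) * besselInt (1 - s) (π ^ 2 * ‖ξ‖ ^ 2) y ^ 2 +
        (2 * (π ^ 2 * ‖ξ‖ ^ 2) * y * besselInt (1 - s + 1) (π ^ 2 * ‖ξ‖ ^ 2) y) ^ 2)) := by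
    intro y
    rw [← ENNReal.ofReal_mul (by positivity)]
    congr 1
    simp only [extEnergyDensity, extMult, extMultDeriv]
    field_simp
  simp_rw [e]
  rw [lintegral_const_mul' _ _ (by finiteness),
    lintegral_besselInt_energy hs0 hs1 (by positivity), ← ENNReal.ofReal_mul (by positivity)]
  congr 1
  field_simp

variable [MeasurableSpace E] [BorelSpace E]

theorem measurable_extEnergyDensity (s : ℝ) {v : E → ℂ} (hv : Measurable v) :
    Measurable (fun p : E × ℝ => extEnergyDensity s v p.1 p.2) := by
  have h1 := measurable_extMult (E := E) s
  have h2 := measurable_extMultDeriv (E := E) s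
  unfold extEnergyDensity
  fun_prop

variable [InnerProductSpace ℝ E] [FiniteDimensional ℝ E]

theorem memLp_norm_mul_norm (v : 𝓢(E, ℂ)) : MemLp (fun ξ => ‖ξ‖ * ‖v ξ‖) 2 := by
  rw [memLp_two_iff_integrable_sq (by fun_prop)]
  obtain ⟨C, hC⟩ := v.decay 0 0
  refine ((v.integrable_pow_mul volume 2).mul_const C).mono' (by fun_prop)
    (Eventually.of_forall fun ξ => ?_)
  have h := hC.2 ξ
  rw [pow_zero, one_mul, norm_iteratedFDeriv_zero] at h
  rw [Real.norm_of_nonneg (by positivity), mul_pow, sq ‖v ξ‖, ← mul_assoc]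
  exact mul_le_mul_of_nonneg_left h (by positivity)

/-- Plancherel identity for the Dirichlet energy on a horizontal slice. -/
theorem integral_slice_energy {s y : ℝ} (hs : 0 < s) (hy : 0 < y) (v : 𝓢(E, ℂ)) {w : E → ℝ → ℝ}
    (hw : ∀ t, 0 < t → ∀ x, (w x t : ℂ) = 𝓕 (fun ξ => (extMult s ξ t : ℂ) * v ξ) x) :
    Integrable (fun ξ => extEnergyDensity s v ξ y) ∧
    ∫ x, y ^ (1 - 2 * s) * (‖fderiv ℝ (fun x' => w x' y) x‖ ^ 2 + (deriv (fun t => w x t) y) ^ 2) =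
      ∫ ξ, extEnergyDensity s v ξ y := by
  have hmt : ∀ t, Measurable (fun ξ : E => extMult s ξ t) := fun t =>
    (measurable_extMult s).of_uncurry_right
  have hmd : Measurable (fun ξ : E => extMultDeriv s ξ y) :=
    (measurable_extMultDeriv s).of_uncurry_right
  have hmt' : AEStronglyMeasurable (fun ξ : E => (extMult s ξ y : ℂ)) :=
    (Complex.measurable_ofReal.comp (hmt y)).aestronglyMeasurable
  have hmd' : AEStronglyMeasurable (fun ξ : E => (extMultDeriv s ξ y : ℂ)) :=
    (Complex.measurable_ofReal.comp hmd).aestronglyMeasurable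
  have hv1 : Integrable v := v.integrable
  have hv2 : MemLp v 2 := v.memLp 2
  have hle : ∀ ξ, ‖(extMult s ξ y : ℂ) * v ξ‖ ≤ ‖v ξ‖ := fun ξ => by
    rw [norm_mul, Complex.norm_real]
    exact mul_le_of_le_one_left (norm_nonneg _) (abs_extMult_le hs ξ y)
  have hle' : ∀ ξ, ‖(extMultDeriv s ξ y : ℂ) * v ξ‖ ≤ 2 / y * ‖v ξ‖ := fun ξ => by
    rw [norm_mul, Complex.norm_real]
    exact mul_le_mul_of_nonneg_right (abs_extMultDeriv_le hs ξ hy) (norm_nonneg _)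
  have hh1 : Integrable (fun ξ => (extMult s ξ y : ℂ) * v ξ) :=
    hv1.norm.mono' (hmt'.mul hv1.1) (Eventually.of_forall hle)
  have hnle : ∀ ξ, ‖‖ξ‖ * ‖(extMult s ξ y : ℂ) * v ξ‖‖ ≤ ‖ξ‖ * ‖v ξ‖ := fun ξ => by
    rw [Real.norm_of_nonneg (by positivity)]
    exact mul_le_mul_of_nonneg_left (hle ξ) (norm_nonneg _)
  have hnm : AEStronglyMeasurable (fun ξ => ‖ξ‖ * ‖(extMult s ξ y : ℂ) * v ξ‖) :=
    continuous_norm.aestronglyMeasurable.mul hh1.1.norm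
  have hh2 : Integrable (fun ξ => ‖ξ‖ * ‖(extMult s ξ y : ℂ) * v ξ‖) := by
    have := v.integrable_pow_mul volume 1
    simp only [pow_one] at this
    exact this.mono' hnm (Eventually.of_forall hnle)
  have hh3 : MemLp (fun ξ => ‖ξ‖ * ‖(extMult s ξ y : ℂ) * v ξ‖) 2 :=
    (memLp_norm_mul_norm v).mono hnm (Eventually.of_forall fun ξ =>
      (hnle ξ).trans (Real.le_norm_self _))
  have hk1 : Integrable (fun ξ => (extMultDeriv s ξ y : ℂ) * v ξ) :=
    (hv1.norm.const_mul (2 / y)).mono' (hmd'.mul hv1.1) (Eventually.of_forall hle')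
  have hk2 : MemLp (fun ξ => (extMultDeriv s ξ y : ℂ) * v ξ) 2 :=
    (hv2.norm.const_mul (2 / y)).mono (hmd'.mul hv1.1) (Eventually.of_forall fun ξ =>
      (hle' ξ).trans (Real.le_norm_self _))
  obtain ⟨hgi, hge⟩ := integral_norm_fderiv_sq_of_eq_fourier (hw y hy) hh1 hh2 hh3
  obtain ⟨hdi, hde⟩ := memLp_fourier_and_integral_norm_sq hk1 hk2
  have hderiv : ∀ x, (deriv (fun t => w x t) y) ^ 2 =
      ‖𝓕 (fun ξ => (extMultDeriv s ξ y : ℂ) * v ξ) x‖ ^ 2 := by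
    intro x
    have hd := hasDerivAt_fourier_mul hy hv1 hmt hmd hh1
      (fun ξ t ht => abs_extMultDeriv_le hs ξ ht) (fun ξ t ht => hasDerivAt_extMult hs ξ ht) x
    have hev : (fun t => (w x t : ℂ)) =ᶠ[nhds y]
        fun t => 𝓕 (fun ξ => (extMult s ξ t : ℂ) * v ξ) x := by
      filter_upwards [Ioi_mem_nhds hy] with t ht using hw t ht x
    have hd' := hd.congr_of_eventuallyEq hev
    have hre : HasDerivAt (fun t => w x t)
        (𝓕 (fun ξ => (extMultDeriv s ξ y : ℂ) * v ξ) x).re y := by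
      have := Complex.reCLM.hasFDerivAt.comp_hasDerivAt y hd'
      exact this
    rw [← (hre.ofReal_comp).unique hd', hre.deriv, Complex.norm_real, Real.norm_eq_abs, sq_abs]
  have hxi : Integrable (fun ξ => 4 * π ^ 2 * ‖ξ‖ ^ 2 * ‖(extMult s ξ y : ℂ) * v ξ‖ ^ 2) :=
    ((hh3.integrable_sq).const_mul (4 * π ^ 2)).congr (Eventually.of_forall fun ξ => by ring)
  have hyi := hk2.integrable_norm_pow two_ne_zero
  have hsum : ∀ ξ, extEnergyDensity s v ξ y = y ^ (1 - 2 * s) *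
      (4 * π ^ 2 * ‖ξ‖ ^ 2 * ‖(extMult s ξ y : ℂ) * v ξ‖ ^ 2 +
        ‖(extMultDeriv s ξ y : ℂ) * v ξ‖ ^ 2) := fun ξ => by
    simp only [norm_mul, Complex.norm_real, mul_pow, Real.norm_eq_abs, sq_abs, extEnergyDensity]
    ring
  simp_rw [hsum]
  refine ⟨(hxi.add hyi).const_mul _, ?_⟩
  rw [integral_const_mul, integral_const_mul, integral_add hxi hyi]
  simp_rw [hderiv]
  rw [integral_add hgi (hdi.integrable_norm_pow two_ne_zero), hge, hde]

/-- The weighted Dirichlet energy of the extension in Fourier variables. -/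
theorem integral_extension_energy {s : ℝ} (hs0 : 0 < s) (hs1 : s < 1) (v : 𝓢(E, ℂ))
    {w : E → ℝ → ℝ}
    (hw : ∀ t, 0 < t → ∀ x, (w x t : ℂ) = 𝓕 (fun ξ => (extMult s ξ t : ℂ) * v ξ) x) :
    ∫ y in Set.Ioi (0 : ℝ), ∫ x,
      y ^ (1 - 2 * s) * (‖fderiv ℝ (fun x' => w x' y) x‖ ^ 2 + (deriv (fun t => w x t) y) ^ 2) =
    2 * Real.Gamma (1 - s) / Real.Gamma s * ∫ ξ, (π ^ 2 * ‖ξ‖ ^ 2) ^ s * ‖v ξ‖ ^ 2 := by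
  have hG := Real.Gamma_pos_of_pos hs0
  have hG1 : 0 < Real.Gamma (1 - s) := Real.Gamma_pos_of_pos (by linarith)
  have hvm : Measurable v := v.continuous.measurable
  have hmeas := measurable_extEnergyDensity s hvm
  have hnn : ∀ y ∈ Set.Ioi (0 : ℝ), ∀ ξ, 0 ≤ extEnergyDensity s v ξ y := fun y hy ξ => by
    have hy' : (0 : ℝ) < y := hy
    unfold extEnergyDensity
    positivity
  have hswap : Measurable (fun p : ℝ × E => extEnergyDensity s v p.2 p.1) :=
    hmeas.comp measurable_swap
  rw [setIntegral_congr_fun measurableSet_Ioi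
      (fun y hy => (integral_slice_energy hs0 hy v hw).2),
    integral_eq_lintegral_of_nonneg_ae
      ((ae_restrict_mem measurableSet_Ioi).mono fun y hy => integral_nonneg (hnn y hy))
      (hswap.stronglyMeasurable.integral_prod_right).aestronglyMeasurable,
    setLIntegral_congr_fun measurableSet_Ioi (fun y hy => ofReal_integral_eq_lintegral_ofReal
      (integral_slice_energy hs0 hy v hw).1 (Eventually.of_forall (hnn y hy))),
    lintegral_lintegral_swap (hswap.ennreal_ofReal).aemeasurable]
  simp_rw [lintegral_extEnergyDensity hs0 hs1]
  rw [← integral_const_mul, integral_eq_lintegral_of_nonneg_ae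
    (Eventually.of_forall fun ξ => by positivity)
    (Measurable.aestronglyMeasurable (by fun_prop))]

end EnergyIdentity

section FourierConventions

open scoped FourierTransform SchwartzMap

theorem FT_eq_fourierInv {n : ℕ} (u : EuclideanSpace ℝ (Fin n) → ℂ)
    (ξ : EuclideanSpace ℝ (Fin n)) :
    FT u ξ = (((2 * π) ^ (-(n : ℝ) / 2) : ℝ) : ℂ) * 𝓕⁻ u ((-(2 * π)⁻¹ : ℝ) • ξ) := by
  rw [FT, Real.fourierInv_eq']
  congr 2 with x
  rw [smul_eq_mul, inner_smul_right, real_inner_comm x ξ,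
    show 2 * π * (-(2 * π)⁻¹ * ⟪x, ξ⟫) = -⟪x, ξ⟫ by field_simp]
  congr 2
  push_cast
  ring

theorem integral_rpow_mul_norm_FT_sq {n : ℕ} (s : ℝ) (u : EuclideanSpace ℝ (Fin n) → ℂ) :
    ∫ ξ : EuclideanSpace ℝ (Fin n), ‖ξ‖ ^ (2 * s) * ‖FT u ξ‖ ^ 2 =
      (2 * π) ^ (2 * s) * ∫ ξ : EuclideanSpace ℝ (Fin n), ‖ξ‖ ^ (2 * s) * ‖𝓕⁻ u ξ‖ ^ 2 := by
  have hpi : 0 < 2 * π := by positivity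
  have hn : ((2 * π) ^ (-(n : ℝ) / 2)) ^ 2 * (2 * π) ^ n = 1 := by
    rw [← Real.rpow_natCast, ← Real.rpow_natCast, ← Real.rpow_mul hpi.le, ← Real.rpow_add hpi]
    simp
  have e : ∀ ξ : EuclideanSpace ℝ (Fin n), ‖ξ‖ ^ (2 * s) * ‖FT u ξ‖ ^ 2 =
      ((2 * π) ^ (-(n : ℝ) / 2)) ^ 2 * (2 * π) ^ (2 * s) *
        (fun η => ‖η‖ ^ (2 * s) * ‖𝓕⁻ u η‖ ^ 2) ((-(2 * π)⁻¹ : ℝ) • ξ) := by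
    intro ξ
    have h : ‖ξ‖ = 2 * π * ‖(-(2 * π)⁻¹ : ℝ) • ξ‖ := by
      rw [norm_smul, norm_neg, Real.norm_of_nonneg (by positivity)]
      field_simp
    rw [FT_eq_fourierInv, norm_mul, Complex.norm_real, Real.norm_of_nonneg (by positivity)]
    conv_lhs => rw [h, Real.mul_rpow hpi.le (norm_nonneg _)]
    ring
  simp_rw [e]
  rw [integral_const_mul, Measure.integral_comp_smul volume
    (fun η : EuclideanSpace ℝ (Fin n) => ‖η‖ ^ (2 * s) * ‖𝓕⁻ u η‖ ^ 2), finrank_euclideanSpace_fin,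
    abs_inv, abs_pow, abs_neg, abs_of_pos (inv_pos.2 hpi), inv_pow, inv_inv, smul_eq_mul]
  linear_combination ((2 * π) ^ (2 * s) * ∫ ξ : EuclideanSpace ℝ (Fin n),
    ‖ξ‖ ^ (2 * s) * ‖𝓕⁻ u ξ‖ ^ 2) * hn

theorem exists_schwartzMap_coe_eq_fourierInv {E : Type*} [NormedAddCommGroup E]
    [InnerProductSpace ℝ E] [FiniteDimensional ℝ E] [MeasurableSpace E] [BorelSpace E]
    (u : 𝓢(E, ℝ)) : ∃ v : 𝓢(E, ℂ), ⇑v = 𝓕⁻ (fun z => (u z : ℂ)) :=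
  ⟨𝓕⁻ (SchwartzMap.postcompCLM Complex.ofRealCLM u), SchwartzMap.fourierInv_coe _⟩

end FourierConventions

/-- For Schwartz `u` and its normalized Caffarelli–Silvestre extension `w`, the weighted
Dirichlet energy of `w` equals `(2s/C_s) ∫ |ξ|^{2s}|𝓕u(ξ)|² dξ`. Here
`|∇w|² = ‖∇ₓw‖² + (∂_y w)²` is the square of the full gradient in `(x,y)`. -/
theorem stmt13 {n : ℕ} (hn : 1 ≤ n) (s : ℝ) (hs : s ∈ Set.Ioo (0 : ℝ) 1)
    (u : SchwartzMap (EuclideanSpace ℝ (Fin n)) ℝ)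
    (w : EuclideanSpace ℝ (Fin n) → ℝ → ℝ)
    (hw : ∀ (x : EuclideanSpace ℝ (Fin n)) (y : ℝ),
      w x y = (1 / ∫ z : EuclideanSpace ℝ (Fin n), (‖z‖ ^ 2 + 1) ^ (-((n : ℝ) + 2 * s) / 2)) *
        ∫ ξ : EuclideanSpace ℝ (Fin n),
          y ^ (2 * s) * u ξ * (‖x - ξ‖ ^ 2 + y ^ 2) ^ (-((n : ℝ) + 2 * s) / 2)) :
    (∫ y in Set.Ioi (0 : ℝ), ∫ x : EuclideanSpace ℝ (Fin n),
        y ^ (1 - 2 * s) *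
          (‖fderiv ℝ (fun x' => w x' y) x‖ ^ 2 + (deriv (fun t => w x t) y) ^ 2))
      = (2 * s / Cs s) *
        ∫ ξ : EuclideanSpace ℝ (Fin n),
          ‖ξ‖ ^ (2 * s) * ‖FT (fun z => ((u z : ℝ) : ℂ)) ξ‖ ^ 2 := by
  obtain ⟨hs0, hs1⟩ := hs
  obtain ⟨v, hv⟩ := exists_schwartzMap_coe_eq_fourierInv u
  have hG := Real.Gamma_pos_of_pos hs0
  have hG1 : 0 < Real.Gamma (1 - s) := Real.Gamma_pos_of_pos (by linarith)
  rw [integral_extension_energy hs0 hs1 v fun t ht x => ?_]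
  · simp_rw [hv]
    rw [integral_rpow_mul_norm_FT_sq, Cs, add_comm 1 s, Real.Gamma_add_one hs0.ne',
      ← integral_const_mul, ← mul_assoc, ← integral_const_mul]
    congr 1 with ξ
    have h4 : (4 : ℝ) ^ s = 2 ^ (2 * s) := by
      rw [Real.rpow_mul (by norm_num), Real.rpow_two]
      norm_num
    have hsq : ∀ a : ℝ, 0 ≤ a → (a ^ 2) ^ s = a ^ (2 * s) := fun a ha => by
      rw [Real.rpow_mul ha, Real.rpow_two]
    rw [h4, Real.mul_rpow (by positivity) (by positivity), hsq π Real.pi_pos.le,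
      hsq ‖ξ‖ (norm_nonneg _), Real.mul_rpow (by positivity) Real.pi_pos.le]
    field_simp
  · have hfin : (Module.finrank ℝ (EuclideanSpace ℝ (Fin n)) : ℝ) = n := by simp
    have hexp : -((n : ℝ) + 2 * s) / 2 =
        -(s + (Module.finrank ℝ (EuclideanSpace ℝ (Fin n)) : ℝ) / 2) := by
      rw [hfin]
      ring
    rw [hw, hv, hexp]
    exact extension_eq_fourier hs0 ht u.integrable x
end
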